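/- arXiv:1809.05009 — 2 statements merged into one kernel-verified Lean document; each statement's English description precedes it below -/
import Mathlib

section
/- For every instance of P|partition|ΣC_j and every feasible preemptive schedule S, there exists a feasible non-preemptive schedule whose total completion time is at most the total completion time of S. Consequently, allowing preemption does not decrease the optimal total completion time. -/
/-- A non-preemptive schedule `(s, M)` for the instance with `m` machines,
processing times `p` and resources `r` is feasible if all start times are
nonnegative and the processing intervals of any two distinct jobs assigned to
the same machine, or having the same resource, are disjoint. -/
def Feasible {J R : Type} (m : ℕ) (p : J → ℝ) (r : J → R)
    (s : J → ℝ) (M : J → Fin m) : Prop :=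
  (∀ j, 0 ≤ s j) ∧
  ∀ j j' : J, j ≠ j' → (M j = M j' ∨ r j = r j') →
    Disjoint (Set.Ico (s j) (s j + p j)) (Set.Ico (s j') (s j' + p j'))

/-- A feasible preemptive schedule for the instance with `m` machines, processing
times `p` and resources `r`.  Each job `j` has a nonempty finite set of parts; a
part is a triple consisting of a machine and the two endpoints `a < b` (with
`a ≥ 0`) of its half-open processing interval `[a, b)`.  The intervals of the
parts of a single job are pairwise disjoint and their lengths sum to `p j`; the
intervals of parts on the same machine are pairwise disjoint; and the intervals
of parts of distinct jobs having the same resource are disjoint. -/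
structure PSchedule (J R : Type) (m : ℕ) (p : J → ℝ) (r : J → R) where
  parts : J → Finset (Fin m × ℝ × ℝ)
  parts_nonempty : ∀ j, (parts j).Nonempty
  start_nonneg : ∀ j, ∀ q ∈ parts j, 0 ≤ q.2.1
  start_lt_end : ∀ j, ∀ q ∈ parts j, q.2.1 < q.2.2
  length_sum : ∀ j, ∑ q ∈ parts j, (q.2.2 - q.2.1) = p j
  job_disjoint : ∀ j, ∀ q ∈ parts j, ∀ q' ∈ parts j, q ≠ q' →
    Disjoint (Set.Ico q.2.1 q.2.2) (Set.Ico q'.2.1 q'.2.2)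
  machine_disjoint : ∀ j j' : J, ∀ q ∈ parts j, ∀ q' ∈ parts j',
    ¬(j = j' ∧ q = q') → q.1 = q'.1 →
    Disjoint (Set.Ico q.2.1 q.2.2) (Set.Ico q'.2.1 q'.2.2)
  res_disjoint : ∀ j j' : J, j ≠ j' → r j = r j' →
    ∀ q ∈ parts j, ∀ q' ∈ parts j',
    Disjoint (Set.Ico q.2.1 q.2.2) (Set.Ico q'.2.1 q'.2.2)

/-- The completion time of job `j` in a preemptive schedule: the maximum right
endpoint of the intervals of its parts. -/
noncomputable def PSchedule.C {J R : Type} {m : ℕ} {p : J → ℝ} {r : J → R}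
    (S : PSchedule J R m p r) (j : J) : ℝ :=
  (S.parts j).sup' (S.parts_nonempty j) (fun q => q.2.2)

/-!
Cut the schedule into pieces, allow empty pieces, and let the end points vary: for a fixed set of
pieces, the schedules of bounded total completion time form a compact set. Choose one that minimises
the total completion time and, among these, maximises the sum of the squared piece lengths.

Suppose a job still has two nonempty pieces `x` and `y`. Moving `δ` units of work from `y` to `x`
delays everything after `x` on its machine by `δ` and advances everything after `y` on its machine
by `δ`. For small `δ` of either sign the result is again a schedule, provided that pieces of one
resource that follow each other without a gap are on the same machine; this can be arranged
beforehand by swapping the remaining loads of two machines. The total completion time is affine in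
`δ`, so by minimality it is constant, while the sum of squares is strictly convex in `δ` and cannot
have a maximum at `δ = 0`.
-/

section

open Filter Set Topology

variable {I J K R T : Type*}

section LinearOrder

variable [LinearOrder T] {ρ : I → R} {μ : I → K} {a b : I → T}

lemma disjoint_Ico_Ico_iff {a b c d : T} :
    Disjoint (Ico a b) (Ico c d) ↔ b ≤ a ∨ d ≤ c ∨ b ≤ c ∨ d ≤ a := by
  rw [Ico_disjoint_Ico]
  grind

/-- Piece `i` occupies machine `μ i` and resource `ρ i` during `[a i, b i)`; pieces sharing a
machine or a resource never run simultaneously. A piece with `b i ≤ a i` is empty and harmless. -/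
def NonOverlapping (ρ : I → R) (μ : I → K) (a b : I → T) : Prop :=
  Pairwise fun i k => μ i = μ k ∨ ρ i = ρ k → Disjoint (Ico (a i) (b i)) (Ico (a k) (b k))

/-- The nonempty pieces `i` and `k` use the same resource, and `k` starts when `i` ends. -/
structure Abut (ρ : I → R) (a b : I → T) (i k : I) : Prop where
  left_nonempty : a i < b i
  right_nonempty : a k < b k
  resource_eq : ρ i = ρ k
  end_eq_start : b i = a k

/-- No piece on machine `u` is running both before and after time `t`. -/
def IsBreakpoint (μ : I → K) (a b : I → T) (u : K) (t : T) : Prop :=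
  ∀ i, μ i = u → b i ≤ t ∨ t ≤ a i

namespace NonOverlapping

lemma isBreakpoint_end (h : NonOverlapping ρ μ a b) {x : I} (hx : a x < b x) :
    IsBreakpoint μ a b (μ x) (b x) := by
  intro i hi
  rcases eq_or_ne i x with rfl | hix
  · exact Or.inl le_rfl
  · have := disjoint_Ico_Ico_iff.1 (h hix (Or.inl hi))
    grind

lemma isBreakpoint_start (h : NonOverlapping ρ μ a b) {x : I} (hx : a x < b x) :
    IsBreakpoint μ a b (μ x) (a x) := by
  intro i hi
  rcases eq_or_ne i x with rfl | hix
  · exact Or.inr le_rfl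
  · have := disjoint_Ico_Ico_iff.1 (h hix (Or.inl hi))
    grind

lemma eq_of_end_eq (h : NonOverlapping ρ μ a b) {i k : I} (hi : a i < b i) (hk : a k < b k)
    (hconflict : μ i = μ k ∨ ρ i = ρ k) (hend : b i = b k) : i = k := by
  by_contra hik
  have := disjoint_Ico_Ico_iff.1 (h hik hconflict)
  grind

lemma eq_of_start_eq (h : NonOverlapping ρ μ a b) {i k : I} (hi : a i < b i) (hk : a k < b k)
    (hconflict : μ i = μ k ∨ ρ i = ρ k) (hstart : a i = a k) : i = k := by
  by_contra hik
  have := disjoint_Ico_Ico_iff.1 (h hik hconflict)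
  grind

end NonOverlapping

section SwapTails

variable [DecidableEq K]

/-- The assignment of pieces to machines in which the machines `u` and `v` exchange all pieces that
start at time `t` or later. -/
def swapTails (μ : I → K) (a : I → T) (t : T) (u v : K) (i : I) : K :=
  if t ≤ a i then Equiv.swap u v (μ i) else μ i

lemma nonOverlapping_swapTails (h : NonOverlapping ρ μ a b) {u v : K} {t : T}
    (hu : IsBreakpoint μ a b u t) (hv : IsBreakpoint μ a b v t) :
    NonOverlapping ρ (swapTails μ a t u v) a b := by
  have disjoint_of_late_of_early {i k : I} (hik : i ≠ k) (hi : t ≤ a i) (hk : a k < t)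
      (hmachine : Equiv.swap u v (μ i) = μ k) : Disjoint (Ico (a i) (b i)) (Ico (a k) (b k)) := by
    by_cases hkt : b k ≤ t
    · exact disjoint_Ico_Ico_iff.2 (by grind)
    · have hku : μ k ≠ u := fun hk' => (hu k hk').elim hkt hk.not_ge
      have hkv : μ k ≠ v := fun hk' => (hv k hk').elim hkt hk.not_ge
      rw [Equiv.swap_apply_eq_iff, Equiv.swap_apply_of_ne_of_ne hku hkv] at hmachine
      exact h hik (Or.inl hmachine)
  rintro i k hik (hmachine | hresource)
  · unfold swapTails at hmachine
    split_ifs at hmachine with hi hk hk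
    · exact h hik (Or.inl ((Equiv.swap u v).injective hmachine))
    · exact disjoint_of_late_of_early hik hi (not_le.1 hk) hmachine
    · exact (disjoint_of_late_of_early hik.symm hk (not_le.1 hi) hmachine.symm).symm
    · exact h hik (Or.inl hmachine)
  · exact h hik (Or.inr hresource)

lemma Abut.swapTails_eq {x y : I} (hxy : Abut ρ a b x y) :
    swapTails μ a (a y) (μ x) (μ y) x = swapTails μ a (a y) (μ x) (μ y) y := by
  have hx : ¬ a y ≤ a x := not_le.2 (hxy.end_eq_start ▸ hxy.left_nonempty)
  simp [swapTails, hx]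

lemma Abut.swapTails_eq_of_eq (h : NonOverlapping ρ μ a b) {x y i k : I} (hxy : Abut ρ a b x y)
    (hne : μ x ≠ μ y) (hik : Abut ρ a b i k) (heq : μ i = μ k) :
    swapTails μ a (a y) (μ x) (μ y) i = swapTails μ a (a y) (μ x) (μ y) k := by
  have hbreak_x := h.isBreakpoint_end hxy.left_nonempty
  have hbreak_y := h.isBreakpoint_start hxy.right_nonempty
  obtain ⟨hx, hy, hρxy, hend_xy⟩ := hxy
  obtain ⟨hi, hk, hρik, hend_ik⟩ := hik
  unfold swapTails
  split_ifs with hi_late hk_late hk_late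
  · rw [heq]
  · exact absurd (hi_late.trans (hi.le.trans hend_ik.le)) hk_late
  · have not_both : ¬ (i = x ∧ k = y) := by
      rintro ⟨rfl, rfl⟩
      exact hne heq
    have hkx : μ k ≠ μ x := fun hkx => by
      have hend : b i = b x := by grind [hbreak_x i (heq.trans hkx)]
      have hix : i = x := h.eq_of_end_eq hi hx (Or.inl (heq.trans hkx)) hend
      exact not_both ⟨hix, h.eq_of_start_eq hk hy (Or.inr (by grind)) (by grind)⟩
    have hky : μ k ≠ μ y := fun hky => by
      have hstart : a k = a y := by grind [hbreak_y i (heq.trans hky)]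
      have hk_eq : k = y := h.eq_of_start_eq hk hy (Or.inl hky) hstart
      exact not_both ⟨h.eq_of_end_eq hi hx (Or.inr (by grind)) (by grind), hk_eq⟩
    rw [Equiv.swap_apply_of_ne_of_ne hkx hky, heq]
  · exact heq

end SwapTails

lemma NonOverlapping.exists_abut_machine_eq [Finite I] [Finite K] (h : NonOverlapping ρ μ a b) :
    ∃ ν : I → K, NonOverlapping ρ ν a b ∧ ∀ i k, Abut ρ a b i k → ν i = ν k := by
  classical
  let agreeing (ν : I → K) : Set (I × I) := {q | Abut ρ a b q.1 q.2 ∧ ν q.1 = ν q.2}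
  obtain ⟨ν, hν, hmax⟩ := Set.exists_max_image {ν : I → K | NonOverlapping ρ ν a b}
    (fun ν => (agreeing ν).ncard) (Set.toFinite _) ⟨μ, h⟩
  refine ⟨ν, hν, fun x y hxy => by_contra fun hne => ?_⟩
  let ν' := swapTails ν a (a y) (ν x) (ν y)
  have hν' : NonOverlapping ρ ν' a b :=
    nonOverlapping_swapTails hν (hxy.end_eq_start ▸ hν.isBreakpoint_end hxy.left_nonempty)
      (hν.isBreakpoint_start hxy.right_nonempty)
  have hlt : agreeing ν ⊂ agreeing ν' :=
    ⟨fun _ hq => ⟨hq.1, hxy.swapTails_eq_of_eq hν hne hq.1 hq.2⟩,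
      fun hsub => hne (hsub (a := (x, y)) ⟨hxy, hxy.swapTails_eq⟩).2⟩
  exact (hmax ν' hν').not_gt (ncard_lt_ncard hlt)

end LinearOrder

section Shift

variable {ρ : I → R} {μ : I → K} {a b : I → ℝ}

/-- The event times `c` after every event at time `t` on machine `u` has been moved to
`t + δ * φ u t`. -/
def shift (φ : K → ℝ → ℝ) (μ : I → K) (δ : ℝ) (c : I → ℝ) (i : I) : ℝ :=
  c i + δ * φ (μ i) (c i)

lemma eventually_add_mul_lt {u v : ℝ} (s t : ℝ) (h : u < v) :
    ∀ᶠ δ in 𝓝 (0 : ℝ), u + δ * s < v + δ * t :=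
  ContinuousAt.eventually_lt (by fun_prop) (by fun_prop) (by simpa using h)

lemma eventually_add_mul_le {u v s t : ℝ} (h : u ≤ v) (hst : u = v → s = t) :
    ∀ᶠ δ in 𝓝 (0 : ℝ), u + δ * s ≤ v + δ * t := by
  rcases h.eq_or_lt with rfl | hlt
  · simp [hst rfl]
  · exact (eventually_add_mul_lt s t hlt).mono fun _ => le_of_lt

variable (φ : K → ℝ → ℝ)

lemma eventually_shift_le_shift {c d : I → ℝ} {i k : I} (h : c i ≤ d k)
    (hmachine : c i = d k → μ i = μ k) :
    ∀ᶠ δ in 𝓝 (0 : ℝ), shift φ μ δ c i ≤ shift φ μ δ d k :=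
  eventually_add_mul_le h fun heq => by rw [hmachine heq, heq]

lemma NonOverlapping.eventually_shift [Finite I] (h : NonOverlapping ρ μ a b)
    (habut : ∀ i k, Abut ρ a b i k → μ i = μ k) :
    ∀ᶠ δ in 𝓝 (0 : ℝ), NonOverlapping ρ μ (shift φ μ δ a) (shift φ μ δ b) := by
  have machine_eq {i k : I} (hconflict : μ i = μ k ∨ ρ i = ρ k) (hi : a i < b i) (hk : a k < b k)
      (heq : b i = a k) : μ i = μ k :=
    hconflict.elim id fun hρ => habut i k ⟨hi, hk, hρ, heq⟩
  simp only [NonOverlapping, Pairwise, disjoint_Ico_Ico_iff, eventually_all]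
  intro i k hik hconflict
  rcases le_or_gt (b i) (a i) with hi | hi
  · exact (eventually_shift_le_shift φ hi fun _ => rfl).mono fun _ => Or.inl
  rcases le_or_gt (b k) (a k) with hk | hk
  · exact (eventually_shift_le_shift φ hk fun _ => rfl).mono fun _ hδ => Or.inr (Or.inl hδ)
  rcases disjoint_Ico_Ico_iff.1 (h hik hconflict) with hi' | hk' | hle | hle
  · exact absurd hi hi'.not_gt
  · exact absurd hk hk'.not_gt
  · exact (eventually_shift_le_shift φ hle (machine_eq hconflict hi hk)).mono
      fun _ hδ => Or.inr (Or.inr (Or.inl hδ))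
  · exact (eventually_shift_le_shift φ hle
      (machine_eq (hconflict.imp Eq.symm Eq.symm) hk hi)).mono
      fun _ hδ => Or.inr (Or.inr (Or.inr hδ))

variable [DecidableEq K]

/-- The displacement that delays by one unit every event on the machine of piece `x` from the end
of `x` on, so that of all pieces only `x` grows. -/
noncomputable def delayAfter (μ : I → K) (b : I → ℝ) (x : I) (u : K) (t : ℝ) : ℝ :=
  if u = μ x ∧ b x ≤ t then 1 else 0

/-- The displacement that lengthens piece `x` and shortens piece `y` at unit rate. -/
noncomputable def transfer (μ : I → K) (b : I → ℝ) (x y : I) (u : K) (t : ℝ) : ℝ :=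
  delayAfter μ b x u t - delayAfter μ b y u t

lemma transfer_zero {x y : I} (hx : 0 < b x) (hy : 0 < b y) (u : K) :
    transfer μ b x y u 0 = 0 := by
  simp [transfer, delayAfter, hx.not_ge, hy.not_ge]

variable [DecidableEq I]

lemma NonOverlapping.delayAfter_sub_delayAfter (h : NonOverlapping ρ μ a b) {i x : I}
    (hi : a i ≤ b i) (hx : a x < b x) :
    delayAfter μ b x (μ i) (b i) - delayAfter μ b x (μ i) (a i) =
      (Pi.single x 1 : I → ℝ) i := by
  rcases eq_or_ne i x with rfl | hix
  · simp [delayAfter, hx]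
  rw [Pi.single_eq_of_ne hix, sub_eq_zero]
  by_cases hmachine : μ i = μ x
  · have hiff : b x ≤ b i ↔ b x ≤ a i := by
      have := disjoint_Ico_Ico_iff.1 (h hix (Or.inl hmachine))
      grind
    simp [delayAfter, hiff]
  · simp [delayAfter, hmachine]

lemma NonOverlapping.transfer_sub_transfer (h : NonOverlapping ρ μ a b) {i x y : I}
    (hi : a i ≤ b i) (hx : a x < b x) (hy : a y < b y) :
    transfer μ b x y (μ i) (b i) - transfer μ b x y (μ i) (a i) =
      (Pi.single x 1 - Pi.single y 1 : I → ℝ) i := by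
  rw [Pi.sub_apply, ← h.delayAfter_sub_delayAfter hi hx, ← h.delayAfter_sub_delayAfter hi hy]
  simp only [transfer]
  ring

end Shift

lemma exists_isMinOn_forall_le {X Y Z : Type*} [TopologicalSpace X]
    [LinearOrder Y] [TopologicalSpace Y] [OrderClosedTopology Y]
    [LinearOrder Z] [TopologicalSpace Z] [OrderClosedTopology Z]
    {s : Set X} (hs : IsCompact s) (hne : s.Nonempty) {f : X → Y} {g : X → Z}
    (hf : Continuous f) (hg : Continuous g) :
    ∃ x ∈ s, IsMinOn f s x ∧ ∀ y ∈ s, f y ≤ f x → g y ≤ g x := by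
  obtain ⟨x₀, hx₀, hmin⟩ := hs.exists_isMinOn hne hf.continuousOn
  obtain ⟨x, ⟨hx, hxx₀⟩, hmax⟩ := (hs.inter_right (isClosed_le hf continuous_const)).exists_isMaxOn
    ⟨x₀, hx₀, le_refl (f x₀)⟩ hg.continuousOn
  exact ⟨x, hx, fun y hy => le_trans hxx₀ (hmin hy), fun y hy hyx => hmax ⟨hy, hyx.trans hxx₀⟩⟩

lemma not_eventually_nonneg_and_imp_nonpos {k L Q : ℝ} (hQ : 0 < Q) :
    ¬ ∀ᶠ δ in 𝓝 (0 : ℝ), 0 ≤ δ * k ∧ (δ * k ≤ 0 → δ * L + δ ^ 2 * Q ≤ 0) := by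
  intro h
  have hneg := (continuous_neg.tendsto' (0 : ℝ) 0 neg_zero).eventually h
  obtain ⟨δ, ⟨⟨hk, hL⟩, hk', hL'⟩, hδ⟩ :=
    (((h.and hneg).filter_mono nhdsWithin_le_nhds).and (self_mem_nhdsWithin (s := Ioi 0))).exists
  have hδQ : 0 < δ ^ 2 * Q := mul_pos (pow_pos hδ 2) hQ
  have := hL (by linarith)
  have := hL' (by linarith)
  linarith

lemma sum_add_mul_sq {A : Type*} [CommSemiring A] [Fintype I] (ℓ e : I → A) (δ : A) :
    ∑ i, (ℓ i + δ * e i) ^ 2 =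
      ∑ i, ℓ i ^ 2 + (δ * ∑ i, 2 * ℓ i * e i + δ ^ 2 * ∑ i, e i ^ 2) := by
  simp only [Finset.mul_sum, ← Finset.sum_add_distrib]
  exact Finset.sum_congr rfl fun i _ => by ring

lemma indicator_lt_sub_indicator_lt {M : Type*} [AddGroup M] [PartialOrder M] {a b : I → M}
    (hab : a ≤ b) (i : I) :
    {i | a i < b i}.indicator b i - {i | a i < b i}.indicator a i = b i - a i := by
  by_cases hi : a i < b i
  · simp [hi]
  · simp [(hab i).eq_of_not_lt hi]

section PieceSchedule

variable [Fintype I] [DecidableEq J] {p : J → ℝ} {r : J → R} {job : I → J} {μ : I → K}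
  {a b : I → ℝ} {C : J → ℝ}

/-- A preemptive schedule of the jobs `J` cut into pieces indexed by `I`, where the pieces of job
`j` are all completed at time `C j`. Pieces may be empty, so that the conditions on `a`, `b` and
`C` are closed. -/
structure IsPieceSchedule (p : J → ℝ) (r : J → R) (job : I → J) (μ : I → K) (a b : I → ℝ)
    (C : J → ℝ) : Prop where
  start_nonneg : ∀ i, 0 ≤ a i
  start_le_end : ∀ i, a i ≤ b i
  nonOverlapping : NonOverlapping (r ∘ job) μ a b
  length_sum : ∀ j, ∑ i with job i = j, (b i - a i) = p j
  end_le : ∀ i, b i ≤ C (job i)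

/-- No piece schedule has a smaller sum of the `C j`, and none with the same sum has a larger sum
of squared piece lengths. -/
structure IsLexOptimal [Fintype J] (K : Type*) (p : J → ℝ) (r : J → R) (job : I → J)
    (a b : I → ℝ) (C : J → ℝ) : Prop where
  sum_le : ∀ {μ' : I → K} {a' b' : I → ℝ} {C' : J → ℝ}, IsPieceSchedule p r job μ' a' b' C' →
    ∑ j, C j ≤ ∑ j, C' j
  sum_sq_le : ∀ {μ' : I → K} {a' b' : I → ℝ} {C' : J → ℝ}, IsPieceSchedule p r job μ' a' b' C' →
    ∑ j, C' j ≤ ∑ j, C j → ∑ i, (b' i - a' i) ^ 2 ≤ ∑ i, (b i - a i) ^ 2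

namespace IsPieceSchedule

lemma exists_nonempty_piece (h : IsPieceSchedule p r job μ a b C) {j : J} (hp : 0 < p j) :
    ∃ i, job i = j ∧ a i < b i := by
  rw [← h.length_sum j, Finset.sum_sub_distrib, sub_pos] at hp
  obtain ⟨i, hi, hlt⟩ := Finset.exists_lt_of_sum_lt hp
  exact ⟨i, (Finset.mem_filter.1 hi).2, hlt⟩

lemma completion_nonneg (h : IsPieceSchedule p r job μ a b C) {j : J} (hp : 0 < p j) :
    0 ≤ C j := by
  obtain ⟨i, rfl, -⟩ := h.exists_nonempty_piece hp
  exact (h.start_nonneg i).trans ((h.start_le_end i).trans (h.end_le i))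

lemma exists_last_piece (h : IsPieceSchedule p r job μ a b C)
    (hempty : ∀ i, a i < b i ∨ b i = 0) {j : J} (hp : 0 < p j) :
    ∃ l, job l = j ∧ ∀ i, job i = j → i ≠ l → b i < b l := by
  obtain ⟨i₀, hi₀, hlt₀⟩ := h.exists_nonempty_piece hp
  obtain ⟨l, hl, hmax⟩ := Set.exists_max_image {i | job i = j} b (Set.toFinite _) ⟨i₀, hi₀⟩
  have hl_pos : 0 < b l := (h.start_nonneg i₀).trans_lt (hlt₀.trans_le (hmax i₀ hi₀))
  have nonempty_of_end_eq {i : I} (hi : b i = b l) : a i < b i :=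
    (hempty i).resolve_right (hi.trans_ne hl_pos.ne')
  refine ⟨l, hl, fun i hi hil => (hmax i hi).lt_of_ne fun heq => hil ?_⟩
  exact h.nonOverlapping.eq_of_end_eq (nonempty_of_end_eq heq) (nonempty_of_end_eq rfl)
    (Or.inr (congrArg r (hi.trans hl.symm))) heq

/-- With its empty pieces moved to time `0`, a job has a unique piece that ends last. -/
lemma indicator_nonempty (h : IsPieceSchedule p r job μ a b C) (hC : ∀ j, 0 ≤ C j) :
    IsPieceSchedule p r job μ ({i | a i < b i}.indicator a) ({i | a i < b i}.indicator b) C where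
  start_nonneg := indicator_nonneg fun i _ => h.start_nonneg i
  start_le_end _ := indicator_le_indicator (h.start_le_end _)
  nonOverlapping i k hik hconflict := by
    by_cases hi : a i < b i
    · by_cases hk : a k < b k
      · simpa [hi, hk] using h.nonOverlapping hik hconflict
      · simp [hk]
    · simp [hi]
  length_sum j := by simp only [indicator_lt_sub_indicator_lt h.start_le_end, h.length_sum]
  end_le i := indicator_apply_le' (fun _ => h.end_le i) fun _ => hC (job i)

lemma exists_abut_machine_eq [Finite K] (h : IsPieceSchedule p r job μ a b C) :
    ∃ ν : I → K, IsPieceSchedule p r job ν a b C ∧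
      ∀ i k, Abut (r ∘ job) a b i k → ν i = ν k := by
  obtain ⟨ν, hν, habut⟩ := h.nonOverlapping.exists_abut_machine_eq
  exact ⟨ν, { h with nonOverlapping := hν }, habut⟩

lemma eventually_shift (h : IsPieceSchedule p r job μ a b C) {φ : K → ℝ → ℝ}
    (habut : ∀ i k, Abut (r ∘ job) a b i k → μ i = μ k) (hφ : ∀ u, φ u 0 = 0)
    (hlength : ∀ j, ∑ i with job i = j, (φ (μ i) (b i) - φ (μ i) (a i)) = 0)
    {l : J → I} (hl : ∀ i, i ≠ l (job i) → b i < b (l (job i))) :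
    ∀ᶠ δ in 𝓝 (0 : ℝ), IsPieceSchedule p r job μ (shift φ μ δ a) (shift φ μ δ b)
      (fun j => shift φ μ δ b (l j)) := by
  have hnonneg : ∀ᶠ δ in 𝓝 (0 : ℝ), ∀ i, 0 ≤ shift φ μ δ a i := eventually_all.2 fun i => by
    simpa [shift] using eventually_add_mul_le (s := 0) (h.start_nonneg i)
      fun heq => by rw [← heq, hφ]
  have hle : ∀ᶠ δ in 𝓝 (0 : ℝ), ∀ i, shift φ μ δ a i ≤ shift φ μ δ b i :=
    eventually_all.2 fun i => eventually_shift_le_shift φ (h.start_le_end i) fun _ => rfl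
  have hlast : ∀ᶠ δ in 𝓝 (0 : ℝ), ∀ i, shift φ μ δ b i ≤ shift φ μ δ b (l (job i)) :=
    eventually_all.2 fun i => by
      by_cases hi : i = l (job i)
      · exact .of_forall fun δ => (congrArg (shift φ μ δ b) hi).le
      · exact eventually_shift_le_shift φ (hl i hi).le fun heq => absurd heq (hl i hi).ne
  filter_upwards [hnonneg, hle, h.nonOverlapping.eventually_shift φ habut, hlast]
    with δ hnonneg hle hnonOverlapping hlast
  refine ⟨hnonneg, hle, hnonOverlapping, fun j => ?_, hlast⟩
  calc ∑ i with job i = j, (shift φ μ δ b i - shift φ μ δ a i)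
      = ∑ i with job i = j, ((b i - a i) + δ * (φ (μ i) (b i) - φ (μ i) (a i))) :=
        Finset.sum_congr rfl fun i _ => by simp only [shift]; ring
    _ = p j := by
        rw [Finset.sum_add_distrib, ← Finset.mul_sum, h.length_sum, hlength, mul_zero, add_zero]

lemma isClosed_setOf_isPieceSchedule (p : J → ℝ) (r : J → R) (job : I → J) (μ : I → K) :
    IsClosed {z : (I → ℝ) × (I → ℝ) × (J → ℝ) |
      IsPieceSchedule p r job μ z.1 z.2.1 z.2.2} := by
  have hiff (z : (I → ℝ) × (I → ℝ) × (J → ℝ)) : IsPieceSchedule p r job μ z.1 z.2.1 z.2.2 ↔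
      (∀ i, 0 ≤ z.1 i) ∧ (∀ i, z.1 i ≤ z.2.1 i) ∧
      (∀ i k, i ≠ k → (μ i = μ k ∨ r (job i) = r (job k)) →
        min (z.2.1 i) (z.2.1 k) ≤ max (z.1 i) (z.1 k)) ∧
      (∀ j, ∑ i with job i = j, (z.2.1 i - z.1 i) = p j) ∧ ∀ i, z.2.1 i ≤ z.2.2 (job i) := by
    simp only [← Ico_disjoint_Ico]
    exact ⟨fun ⟨h₁, h₂, h₃, h₄, h₅⟩ => ⟨h₁, h₂, h₃, h₄, h₅⟩,
      fun ⟨h₁, h₂, h₃, h₄, h₅⟩ => ⟨h₁, h₂, h₃, h₄, h₅⟩⟩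
  simp only [hiff, ofPred_and, ofPred_forall]
  refine .inter (isClosed_iInter fun i => isClosed_le ?_ ?_) <|
    .inter (isClosed_iInter fun i => isClosed_le ?_ ?_) <|
    .inter (isClosed_iInter fun i => isClosed_iInter fun k => isClosed_iInter fun _ =>
      isClosed_iInter fun _ => isClosed_le ?_ ?_) <|
    .inter (isClosed_iInter fun j => isClosed_eq ?_ ?_)
      (isClosed_iInter fun i => isClosed_le ?_ ?_) <;> fun_prop

lemma isCompact_setOf_isPieceSchedule_sum_le [Fintype J] [Finite K] (r : J → R) (job : I → J)
    (hp : ∀ j, 0 < p j) (t : ℝ) :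
    IsCompact {z : (I → ℝ) × (I → ℝ) × (J → ℝ) |
      (∃ μ : I → K, IsPieceSchedule p r job μ z.1 z.2.1 z.2.2) ∧ ∑ j, z.2.2 j ≤ t} := by
  refine IsCompact.of_isClosed_subset
    (isCompact_Icc (a := 0) (b := (fun _ => t, fun _ => t, fun _ => t))) ?_ ?_
  · rw [ofPred_and, ofPred_exists]
    exact (isClosed_iUnion_of_finite fun μ => isClosed_setOf_isPieceSchedule p r job μ).inter
      (isClosed_le (by fun_prop) continuous_const)
  · rintro ⟨a, b, C⟩ ⟨⟨μ, h⟩, hsum⟩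
    have hC_nonneg (j : J) : 0 ≤ C j := h.completion_nonneg (hp j)
    have hC_le (j : J) : C j ≤ t :=
      (Finset.single_le_sum (fun j _ => hC_nonneg j) (Finset.mem_univ j)).trans hsum
    have hb_le (i : I) : b i ≤ t := (h.end_le i).trans (hC_le (job i))
    exact ⟨⟨h.start_nonneg, fun i => (h.start_nonneg i).trans (h.start_le_end i), hC_nonneg⟩,
      fun i => (h.start_le_end i).trans (hb_le i), hb_le, hC_le⟩

end IsPieceSchedule

lemma IsLexOptimal.eq_of_job_eq [Fintype J] (hopt : IsLexOptimal K p r job a b C)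
    (h : IsPieceSchedule p r job μ a b C) (hp : ∀ j, 0 < p j)
    (hempty : ∀ i, a i < b i ∨ b i = 0) (habut : ∀ i k, Abut (r ∘ job) a b i k → μ i = μ k)
    {x y : I} (hx : a x < b x) (hy : a y < b y) (hjob : job x = job y) : x = y := by
  classical
  by_contra hxy
  choose l hl_job hl_last using fun j => h.exists_last_piece hempty (hp j)
  let φ := transfer μ b x y
  let e : I → ℝ := Pi.single x 1 - Pi.single y 1
  have hφe (i : I) : φ (μ i) (b i) - φ (μ i) (a i) = e i :=
    h.nonOverlapping.transfer_sub_transfer (h.start_le_end i) hx hy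
  have he_sum (j : J) : ∑ i with job i = j, e i = 0 := by
    simp [e, Finset.sum_pi_single', hjob]
  have he_sq : 0 < ∑ i, e i ^ 2 :=
    Finset.sum_pos' (fun i _ => sq_nonneg (e i)) ⟨x, Finset.mem_univ x, by simp [e, hxy]⟩
  have hshift := h.eventually_shift habut
    (transfer_zero ((h.start_nonneg x).trans_lt hx) ((h.start_nonneg y).trans_lt hy))
    (by simpa only [← hφe] using he_sum) fun i => hl_last (job i) i rfl
  refine not_eventually_nonneg_and_imp_nonpos (k := ∑ j, φ (μ (l j)) (b (l j)))
    (L := ∑ i, 2 * (b i - a i) * e i) he_sq (hshift.mono fun δ hδ => ?_)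
  have hcost : ∑ j, shift φ μ δ b (l j) ≤ ∑ j, C j + δ * ∑ j, φ (μ (l j)) (b (l j)) := by
    simp only [shift, Finset.sum_add_distrib, ← Finset.mul_sum]
    gcongr with j
    exact (h.end_le (l j)).trans_eq (congrArg C (hl_job j))
  have hlength (i : I) : shift φ μ δ b i - shift φ μ δ a i = (b i - a i) + δ * e i := by
    simp only [← hφe, shift]
    ring
  have hsq := sum_add_mul_sq (fun i => b i - a i) e δ
  simp only [← hlength] at hsq
  have hsum_le := hopt.sum_le hδ
  exact ⟨by linarith, fun hk => by linarith [hopt.sum_sq_le hδ (by linarith)]⟩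

namespace IsPieceSchedule

lemma exists_isLexOptimal [Fintype J] [Finite K] (h : IsPieceSchedule p r job μ a b C)
    (hp : ∀ j, 0 < p j) :
    ∃ (μ' : I → K) (a' b' : I → ℝ) (C' : J → ℝ), IsPieceSchedule p r job μ' a' b' C' ∧
      IsLexOptimal K p r job a' b' C' ∧ ∑ j, C' j ≤ ∑ j, C j := by
  obtain ⟨⟨a', b', C'⟩, ⟨⟨μ', h'⟩, hle⟩, hmin, hmax⟩ :=
    exists_isMinOn_forall_le (isCompact_setOf_isPieceSchedule_sum_le (K := K) r job hp (∑ j, C j))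
      ⟨(a, b, C), ⟨μ, h⟩, le_rfl⟩ (f := fun z => ∑ j, z.2.2 j)
      (g := fun z => ∑ i, (z.2.1 i - z.1 i) ^ 2) (by fun_prop) (by fun_prop)
  refine ⟨μ', a', b', C', h', ⟨fun {μ'' a'' b'' C''} h'' => ?_, fun h'' hle'' => ?_⟩, hle⟩
  · rcases le_total (∑ j, C'' j) (∑ j, C j) with hle'' | hle''
    · exact hmin (a := (a'', b'', C'')) ⟨⟨μ'', h''⟩, hle''⟩
    · exact hle.trans hle''
  · exact hmax (_, _, _) ⟨⟨_, h''⟩, hle''.trans hle⟩ hle''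

lemma exists_injOn_job [Fintype J] [Finite K] (h : IsPieceSchedule p r job μ a b C)
    (hp : ∀ j, 0 < p j) :
    ∃ (μ' : I → K) (a' b' : I → ℝ) (C' : J → ℝ), IsPieceSchedule p r job μ' a' b' C' ∧
      InjOn job {i | a' i < b' i} ∧ ∑ j, C' j ≤ ∑ j, C j := by
  obtain ⟨μ₀, a₀, b₀, C', h₀, hopt₀, hle⟩ := h.exists_isLexOptimal hp
  set a' := {i | a₀ i < b₀ i}.indicator a₀
  set b' := {i | a₀ i < b₀ i}.indicator b₀
  have hlength : ∀ i, b' i - a' i = b₀ i - a₀ i :=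
    indicator_lt_sub_indicator_lt h₀.start_le_end
  have hopt : IsLexOptimal K p r job a' b' C' :=
    ⟨hopt₀.sum_le, by simpa only [hlength] using @hopt₀.sum_sq_le⟩
  have hempty (i : I) : a' i < b' i ∨ b' i = 0 := by
    by_cases hi : a₀ i < b₀ i <;> simp [a', b', hi]
  obtain ⟨μ', h', habut⟩ :=
    (h₀.indicator_nonempty fun j => h₀.completion_nonneg (hp j)).exists_abut_machine_eq
  exact ⟨μ', a', b', C', h', fun _ hx _ hy => hopt.eq_of_job_eq h' hp hempty habut hx hy, hle⟩

lemma end_eq_start_add (h : IsPieceSchedule p r job μ a b C) (hinj : InjOn job {i | a i < b i})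
    {i : I} (hi : a i < b i) : b i = a i + p (job i) := by
  have hsum : ∑ k with job k = job i, (b k - a k) = b i - a i := by
    refine Finset.sum_eq_single_of_mem i (by simp) fun k hk hki => ?_
    have hk_empty : ¬ a k < b k := fun hk' => hki (hinj hk' hi (Finset.mem_filter.1 hk).2)
    exact sub_eq_zero.2 ((not_lt.1 hk_empty).antisymm (h.start_le_end k))
  rw [← h.length_sum, hsum, add_sub_cancel]

lemma exists_feasible {J R : Type} [DecidableEq J] {m : ℕ} {p : J → ℝ} {r : J → R} {job : I → J}
    {μ : I → Fin m} {C : J → ℝ} (h : IsPieceSchedule p r job μ a b C) (hp : ∀ j, 0 < p j)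
    (hinj : InjOn job {i | a i < b i}) :
    ∃ (s : J → ℝ) (M : J → Fin m), Feasible m p r s M ∧ ∀ j, s j + p j ≤ C j := by
  choose piece hjob hlt using fun j => h.exists_nonempty_piece (hp j)
  have hend (j : J) : a (piece j) + p j = b (piece j) := by
    rw [h.end_eq_start_add hinj (hlt j), hjob]
  refine ⟨a ∘ piece, μ ∘ piece, ⟨fun j => h.start_nonneg _, fun j j' hjj' hconflict => ?_⟩,
    fun j => ?_⟩
  · have hpiece : piece j ≠ piece j' := fun heq => hjj' (by rw [← hjob j, heq, hjob])
    simp only [Function.comp_apply, hend]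
    exact h.nonOverlapping hpiece (by simpa [hjob] using hconflict)
  · rw [Function.comp_apply, hend]
    exact (h.end_le _).trans_eq (congrArg C (hjob j))

end IsPieceSchedule

end PieceSchedule

lemma PSchedule.isPieceSchedule {J R : Type} [Fintype J] [DecidableEq J] {m : ℕ} {p : J → ℝ}
    {r : J → R} (S : PSchedule J R m p r) :
    IsPieceSchedule p r (fun i : (j : J) × S.parts j => i.1) (fun i => i.2.1.1)
      (fun i => i.2.1.2.1) (fun i => i.2.1.2.2) S.C where
  start_nonneg i := S.start_nonneg _ _ i.2.2
  start_le_end i := (S.start_lt_end _ _ i.2.2).le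
  nonOverlapping := by
    rintro ⟨j, q, hq⟩ ⟨j', q', hq'⟩ hne hconflict
    rcases eq_or_ne j j' with rfl | hjj'
    · exact S.job_disjoint j q hq q' hq' (by rintro rfl; exact hne rfl)
    · exact hconflict.elim (S.machine_disjoint j j' q hq q' hq' fun heq => hjj' heq.1)
        fun hr => S.res_disjoint j j' hjj' hr q hq q' hq'
  length_sum j := by
    rw [← S.length_sum j, Finset.sum_filter, Fintype.sum_sigma, Finset.sum_eq_single j]
    · simpa using Finset.sum_coe_sort (S.parts j) fun q => q.2.2 - q.2.1
    · intro j' _ hj'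
      simp [hj']
    · simp
  end_le i := Finset.le_sup' (fun q : Fin m × ℝ × ℝ => q.2.2) i.2.2

end

/-- For every feasible preemptive schedule of an instance of `P|partition|ΣC_j`
there is a feasible non-preemptive schedule whose total completion time is at
most the total completion time of the preemptive schedule; hence preemption does
not help. -/
theorem preemption_does_not_help {J R : Type} [Fintype J]
    (m : ℕ) (hm : 1 ≤ m) (p : J → ℝ) (hp : ∀ j, 0 < p j) (r : J → R)
    (S : PSchedule J R m p r) :
    ∃ (s : J → ℝ) (M : J → Fin m),
      Feasible m p r s M ∧ ∑ j, (s j + p j) ≤ ∑ j, S.C j := by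
  classical
  obtain ⟨μ, a, b, C, hsched, hinj, hC⟩ := S.isPieceSchedule.exists_injOn_job hp
  obtain ⟨s, M, hfeasible, hs⟩ := hsched.exists_feasible hp hinj
  exact ⟨s, M, hfeasible, (Finset.sum_le_sum fun j _ => hs j).trans hC⟩
end

section
/- Let S be a feasible (non-preemptive) schedule for an instance of P|partition|ΣC_j such that no feasible schedule has strictly smaller total completion time. Then all jobs sharing the same resource are processed in SPT order: for all jobs j and j' with r_j = r_{j'} and p_j < p_{j'}, it holds that C_j < C_{j'}. -/
open Filter Topology

/-!
Exchanging, from some moment on, two machines that are free at that moment does not affect any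
start time, so one may assume that no resource is handed over from one machine to another without
a pause. In an optimal schedule every machine is then busy without idle time, and the total
completion time is `∑ j, tailCount j * p j`, where `tailCount j` counts the jobs on the machine of
`j` from `j` on. The same assignment stays feasible under small changes of the processing times.
Hence the optimal value, as a function of the processing times, has a linear majorant near every
point that touches it there, and on a segment a lower semicontinuous function of this kind lies
below each of its local majorants. So `∑ j, tailCount j * q j` bounds the optimal value for all
processing times `q`, not only for those near `p`.

With `q` obtained from `p` by exchanging two jobs of the same resource, this shows that the tail
count of the shorter one is at least that of the longer one. Suppose now that the longer job `i`
starts before the shorter job `j`, with no job of their resource in between. They run on different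
machines, as otherwise `i` would have the larger tail count. At time `s j` every machine is busy.
Let `l` be the job that runs at that time, or completes then, on the machine of `i`. It starts
after `i` is completed, so moving `j` to the start of `l` respects the resource of `j`.
Representing on each machine everything up to time `s j` by one pinned block, the bound above with
the block lengths as processing times controls the cost of the jobs after this move, and
optimality yields `tailCount j ≤ tailCount l`. But `tailCount l < tailCount i ≤ tailCount j`.
-/

section Scheduling

variable {J R N : Type*} {Z : Set J} {p q : J → ℝ} {r : J → R} {s : J → ℝ} {M : J → N}

/-! ### Schedules with pinned jobs -/

/-- Two jobs conflict when they use the same machine or the same resource, so that their processing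
intervals must be disjoint. -/
def Conflict (r : J → R) (M : J → N) (j k : J) : Prop :=
  M j = M k ∨ r j = r k

/-- Feasibility of the schedule `(s, M)` when the jobs in `Z` are pinned to start at time `0`.
The machines form an arbitrary type `N`, and disjointness of processing intervals is expressed by
one job being completed before the other one starts. -/
structure PinnedFeasible (Z : Set J) (p : J → ℝ) (r : J → R) (s : J → ℝ) (M : J → N) : Prop where
  start_nonneg : ∀ j, 0 ≤ s j
  start_eq_zero : ∀ j ∈ Z, s j = 0
  completion_le_or : ∀ j k, j ≠ k → Conflict r M j k → s j + p j ≤ s k ∨ s k + p k ≤ s j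

/-- The objective `ΣC_j` of a schedule with processing times `p` and start times `s`. -/
def totalCompletion [Fintype J] (p s : J → ℝ) : ℝ :=
  ∑ j, (s j + p j)

/-- A feasible schedule of minimal total completion time among those with the same pinned jobs. -/
structure PinnedOptimal [Fintype J] (Z : Set J) (p : J → ℝ) (r : J → R) (s : J → ℝ) (M : J → N) :
    Prop extends PinnedFeasible Z p r s M where
  totalCompletion_le : ∀ (s₁ : J → ℝ) (M₁ : J → N), PinnedFeasible Z p r s₁ M₁ →
    totalCompletion p s ≤ totalCompletion p s₁

/-- No resource passes from a job to a job on another machine without a pause. This excludes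
idle time forced on a machine by the resources. -/
def NoHandover (p : J → ℝ) (r : J → R) (s : J → ℝ) (M : J → N) : Prop :=
  ∀ j k, r j = r k → s j + p j = s k → M j = M k

lemma Conflict.symm {j k : J} (h : Conflict r M j k) : Conflict r M k j :=
  h.imp Eq.symm Eq.symm

lemma Ico_add_disjoint_Ico_add_iff {a b x y : ℝ} (hx : 0 < x) (hy : 0 < y) :
    Disjoint (Set.Ico a (a + x)) (Set.Ico b (b + y)) ↔ a + x ≤ b ∨ b + y ≤ a := by
  rw [Set.Ico_disjoint_Ico, min_le_iff, le_max_iff, le_max_iff]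
  grind

lemma feasible_iff_pinnedFeasible_empty {J R : Type} {m : ℕ} {p : J → ℝ} (hp : ∀ j, 0 < p j)
    {r : J → R} {s : J → ℝ} {M : J → Fin m} :
    Feasible m p r s M ↔ PinnedFeasible ∅ p r s M := by
  simp only [Feasible, Ico_add_disjoint_Ico_add_iff (hp _) (hp _)]
  exact ⟨fun h => ⟨h.1, by simp, h.2⟩, fun h => ⟨h.start_nonneg, h.completion_le_or⟩⟩

namespace PinnedFeasible

variable {j k : J}

lemma completion_le_of_start_le (h : PinnedFeasible Z p r s M) (hk : 0 < p k) (hne : j ≠ k)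
    (hc : Conflict r M j k) (hs : s j ≤ s k) : s j + p j ≤ s k := by
  rcases h.completion_le_or j k hne hc with h | h <;> linarith

lemma completion_le_of_start_lt (h : PinnedFeasible Z p r s M) (hk : 0 < p k)
    (hc : Conflict r M j k) (hs : s j < s k) : s j + p j ≤ s k :=
  h.completion_le_of_start_le hk (by rintro rfl; exact hs.false) hc hs.le

lemma eq_of_start_eq (h : PinnedFeasible Z p r s M) (hp : ∀ j, 0 < p j) (hc : Conflict r M j k)
    (hs : s j = s k) : j = k := by
  by_contra hne
  linarith [h.completion_le_of_start_le (hp k) hne hc hs.le, hp j]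

lemma eq_of_completion_eq (h : PinnedFeasible Z p r s M) (hp : ∀ j, 0 < p j)
    (hc : Conflict r M j k) (hs : s j + p j = s k + p k) : j = k := by
  by_contra hne
  rcases h.completion_le_or j k hne hc with h | h <;> linarith [hp j, hp k]

lemma comp_equiv {J' : Type*} (h : PinnedFeasible Z p r s M) (e : J' ≃ J) :
    PinnedFeasible (e ⁻¹' Z) (p ∘ e) (r ∘ e) (s ∘ e) (M ∘ e) where
  start_nonneg j := h.start_nonneg (e j)
  start_eq_zero j := h.start_eq_zero (e j)
  completion_le_or j k hne := h.completion_le_or (e j) (e k) (e.injective.ne hne)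

lemma smul {c : ℝ} (h : PinnedFeasible Z p r s M) (hc : 0 ≤ c) (hq : ∀ j, q j ≤ c * p j) :
    PinnedFeasible Z q r (c • s) M where
  start_nonneg j := mul_nonneg hc (h.start_nonneg j)
  start_eq_zero j hj := by simp [h.start_eq_zero j hj]
  completion_le_or j k hne hjk := by
    simp only [Pi.smul_apply, smul_eq_mul]
    refine (h.completion_le_or j k hne hjk).imp (fun hle => ?_) (fun hle => ?_)
    · linarith [mul_le_mul_of_nonneg_left hle hc, hq j]
    · linarith [mul_le_mul_of_nonneg_left hle hc, hq k]

lemma update [DecidableEq J] (h : PinnedFeasible Z p r s M) {t : ℝ} {n : N} (hj : j ∉ Z)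
    (ht : 0 ≤ t)
    (hfree : ∀ k ≠ j, M k = n ∨ r k = r j → s k + p k ≤ t ∨ t + p j ≤ s k) :
    PinnedFeasible Z p r (Function.update s j t) (Function.update M j n) where
  start_nonneg k := by
    rcases eq_or_ne k j with rfl | hk
    · simpa
    · simpa [hk] using h.start_nonneg k
  start_eq_zero k hkZ := by
    rw [Function.update_of_ne (ne_of_mem_of_not_mem hkZ hj)]
    exact h.start_eq_zero k hkZ
  completion_le_or k l hne hc := by
    unfold Conflict at hc
    rcases eq_or_ne k j with rfl | hk
    · simp only [Function.update_self, Function.update_of_ne hne.symm] at hc ⊢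
      exact (hfree l hne.symm (hc.imp Eq.symm Eq.symm)).symm
    rcases eq_or_ne l j with rfl | hl
    · simp only [Function.update_self, Function.update_of_ne hk] at hc ⊢
      exact hfree k hk hc
    · simp only [Function.update_of_ne hk, Function.update_of_ne hl] at hc ⊢
      exact h.completion_le_or k l hne hc

end PinnedFeasible

/-! ### Removing handovers -/

/-- The machine assignment obtained from `M` by letting the permutation `π` act on the machines of
all jobs that start at time `c` or later. -/
noncomputable def permuteAfter (s : J → ℝ) (M : J → N) (c : ℝ) (π : Equiv.Perm N) (j : J) : N :=
  if c ≤ s j then π (M j) else M j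

namespace PinnedFeasible

lemma permute (h : PinnedFeasible Z p r s M) (hp : ∀ j, 0 < p j) {c : ℝ} {π : Equiv.Perm N}
    (hcut : ∀ j, π (M j) ≠ M j → s j < c → s j + p j ≤ c) :
    PinnedFeasible Z p r s (permuteAfter s M c π) := by
  have cross (j k) (hj : s j < c) (hk : c ≤ s k) (hjk : M j = π (M k)) : s j + p j ≤ s k := by
    by_cases hπ : π (M j) = M j
    · exact h.completion_le_of_start_lt (hp k) (.inl (π.injective (hπ.trans hjk)))
        (hj.trans_le hk)
    · exact (hcut j hπ hj).trans hk
  refine ⟨h.start_nonneg, h.start_eq_zero, fun j k hne hc => ?_⟩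
  rcases hc with hM | hr
  · unfold permuteAfter at hM
    split_ifs at hM with hj hk hk
    · exact h.completion_le_or j k hne (.inl (π.injective hM))
    · exact .inr (cross k j (not_le.1 hk) hj hM.symm)
    · exact .inl (cross j k (not_le.1 hj) hk hM)
    · exact h.completion_le_or j k hne (.inl hM)
  · exact h.completion_le_or j k hne (.inr hr)

lemma completion_le_start_of_handover (h : PinnedFeasible Z p r s M) (hp : ∀ j, 0 < p j)
    {i j k : J} (hij : s i + p i = s j) (hM : M k = M i ∨ M k = M j) (hk : s k < s j) :
    s k + p k ≤ s j := by
  rcases hM with hM | hM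
  · rcases eq_or_ne k i with rfl | hne
    · exact hij.le
    · rcases h.completion_le_or k i hne (.inl hM) with h | h <;> linarith [hp i]
  · exact h.completion_le_of_start_lt (hp j) (.inl hM) hk

open Classical in
lemma permuteAfter_swap_eq (h : PinnedFeasible Z p r s M) (hp : ∀ j, 0 < p j) {i j k l : J}
    (hr : r i = r j) (hij : s i + p i = s j) (hM : M i ≠ M j)
    (hkl : r k = r l) (hkl' : s k + p k = s l) (hMkl : M k = M l) :
    permuteAfter s M (s j) (Equiv.swap (M i) (M j)) k =
      permuteAfter s M (s j) (Equiv.swap (M i) (M j)) l := by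
  unfold permuteAfter
  rw [hMkl]
  split_ifs with hk hl hl
  · rfl
  · linarith [hp k]
  · by_contra hne
    have hl_machine : M l = M i ∨ M l = M j := by
      by_contra! hl'
      exact hne (Equiv.swap_apply_of_ne_of_ne hl'.1 hl'.2).symm
    have hlj : s l = s j :=
      le_antisymm (hkl' ▸ h.completion_le_start_of_handover hp hij (by rwa [hMkl]) (not_le.1 hk)) hl
    have hki : s k + p k = s i + p i := by rw [hkl', hlj, hij]
    rcases hl_machine with hl' | hl'
    · obtain rfl := h.eq_of_completion_eq hp (.inl (hMkl.trans hl')) hki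
      obtain rfl := h.eq_of_start_eq hp (.inr (hkl.symm.trans hr)) hlj
      exact hM hMkl
    · obtain rfl := h.eq_of_start_eq hp (.inl hl') hlj
      obtain rfl := h.eq_of_completion_eq hp (.inr (hkl.trans hr.symm)) hki
      exact hM hMkl
  · rfl

-- Exchanging, from the handover time on, the two machines involved removes one handover and
-- creates none.
lemma exists_noHandover [Finite J] (h : PinnedFeasible Z p r s M) (hp : ∀ j, 0 < p j) :
    ∃ M' : J → N, PinnedFeasible Z p r s M' ∧ NoHandover p r s M' := by
  classical
  let handovers (M : J → N) : Set (J × J) :=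
    {x | r x.1 = r x.2 ∧ s x.1 + p x.1 = s x.2 ∧ M x.1 ≠ M x.2}
  induction hn : (handovers M).ncard using Nat.strong_induction_on generalizing M with
  | _ n ih =>
    by_cases hno : NoHandover p r s M
    · exact ⟨M, h, hno⟩
    unfold NoHandover at hno
    push Not at hno
    obtain ⟨i, j, hr, hij, hM⟩ := hno
    have hi : ¬ s j ≤ s i := by linarith [hp i]
    let M' := permuteAfter s M (s j) (Equiv.swap (M i) (M j))
    have hM' : PinnedFeasible Z p r s M' := by
      refine h.permute hp fun k hk hkj => h.completion_le_start_of_handover hp hij ?_ hkj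
      by_contra! hk'
      exact hk (Equiv.swap_apply_of_ne_of_ne hk'.1 hk'.2)
    have hsub : handovers M' ⊆ handovers M := fun x hx => ⟨hx.1, hx.2.1, fun hMx =>
      hx.2.2 (h.permuteAfter_swap_eq hp hr hij hM hx.1 hx.2.1 hMx)⟩
    have hlt : handovers M' ⊂ handovers M :=
      (Set.ssubset_iff_of_subset hsub).2
        ⟨(i, j), ⟨hr, hij, hM⟩, by simp [handovers, M', permuteAfter, hi]⟩
    exact ih _ (hn ▸ Set.ncard_lt_ncard hlt (Set.toFinite _)) hM' rfl

end PinnedFeasible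

/-! ### Schedules without idle time -/

lemma eventually_nhdsLT_completion_le [Finite J] (p s : J → ℝ) (c : ℝ) :
    ∀ᶠ t in 𝓝[<] c, ∀ j, s j + p j < c → s j + p j ≤ t :=
  eventually_all.2 fun _ => eventually_imp_distrib_left.2 fun hj =>
    ((eventually_gt_nhds hj).mono fun _ => le_of_lt).filter_mono nhdsWithin_le_nhds

lemma wellFounded_start_lt [Finite J] (s : J → ℝ) :
    WellFounded fun j k => s j < s k :=
  Set.wellFoundedOn_range.1 (Set.finite_range s).wellFoundedOn

namespace PinnedOptimal

variable [Fintype J]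

lemma start_le (h : PinnedOptimal Z p r s M) {j : J} {t : ℝ} {n : N} (hj : j ∉ Z) (ht : 0 ≤ t)
    (hfree : ∀ k ≠ j, M k = n ∨ r k = r j → s k + p k ≤ t ∨ t + p j ≤ s k) : s j ≤ t := by
  classical
  by_contra! hlt
  refine (h.totalCompletion_le _ _ (h.update hj ht hfree)).not_gt ?_
  refine Finset.sum_lt_sum (fun k _ => ?_) ⟨j, Finset.mem_univ j, by simpa⟩
  rcases eq_or_ne k j with rfl | hk
  · simpa using hlt.le
  · simp [hk]

lemma exists_completion_eq_start (h : PinnedOptimal Z p r s M) (hno : NoHandover p r s M) {j : J}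
    (hj : 0 < s j) : ∃ k, M k = M j ∧ s k + p k = s j := by
  by_contra! hgap
  obtain ⟨t, hbound, ht, htj : t < s j⟩ := ((eventually_nhdsLT_completion_le p s (s j)).and
    (((eventually_gt_nhds hj).filter_mono nhdsWithin_le_nhds).and self_mem_nhdsWithin)).exists
  have hjZ : j ∉ Z := fun hmem => hj.ne' (h.start_eq_zero j hmem)
  refine htj.not_ge (h.start_le (n := M j) hjZ ht.le fun k hk hc => ?_)
  refine (h.completion_le_or k j hk hc).imp (fun hle => hbound k (hle.lt_of_ne fun heq => ?_))
    (by intro; linarith)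
  exact hgap k (hc.elim id fun hr => hno k j hr heq) heq

lemma exists_straddling (h : PinnedOptimal Z p r s M) (hp : ∀ j, 0 < p j)
    (hno : NoHandover p r s M) {b : ℝ} (hb : 0 < b) (j : J) (hj : b ≤ s j) :
    ∃ k, M k = M j ∧ s k < b ∧ b ≤ s k + p k := by
  induction j using (wellFounded_start_lt s).induction with
  | _ j ih =>
    obtain ⟨k, hk, hkj⟩ := h.exists_completion_eq_start hno (hb.trans_le hj)
    rcases lt_or_ge (s k) b with hkb | hkb
    · exact ⟨k, hk, hkb, hkj ▸ hj⟩
    · obtain ⟨l, hl⟩ := ih k (by linarith [hp k]) hkb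
      exact ⟨l, hk ▸ hl⟩

end PinnedOptimal

/-- The start times obtained from processing times `w` by running the jobs of each machine without
idle time, in the order in which they start in `(s, M)`. -/
noncomputable def packedStart [Fintype J] [DecidableEq N] (s : J → ℝ) (M : J → N) (w : J → ℝ)
    (j : J) : ℝ :=
  ∑ k with M k = M j ∧ s k < s j, w k

/-- The number of jobs on the machine of `j` that start no earlier than `j`. This is the number of
completion times to which the processing time of `j` contributes. -/
noncomputable def tailCount [Fintype J] [DecidableEq N] (s : J → ℝ) (M : J → N) (j : J) : ℕ :=
  Finset.card {k | M k = M j ∧ s j ≤ s k}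

section Packed

variable [Fintype J] [DecidableEq N]

lemma tailCount_lt_tailCount {i j : J} (hM : M i = M j) (hs : s i < s j) :
    tailCount s M j < tailCount s M i := by
  refine Finset.card_lt_card
    ((Finset.ssubset_iff_of_subset fun k => ?_).2 ⟨i, by simp, by simp [hs]⟩)
  simp only [Finset.mem_filter_univ, hM]
  exact fun hk => ⟨hk.1, hs.le.trans hk.2⟩

lemma packedStart_add_eq_sum (hinj : ∀ j k, M j = M k → s j = s k → j = k) (w : J → ℝ) (j : J) :
    packedStart s M w j + w j = ∑ k with M k = M j ∧ s k ≤ s j, w k := by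
  classical
  have hins : Finset.univ.filter (fun k => M k = M j ∧ s k ≤ s j) =
      insert j (Finset.univ.filter fun k => M k = M j ∧ s k < s j) := by
    ext k
    simp only [Finset.mem_filter_univ, Finset.mem_insert, le_iff_lt_or_eq]
    grind
  rw [hins, Finset.sum_insert (by simp), add_comm, packedStart]

lemma totalCompletion_packedStart (hinj : ∀ j k, M j = M k → s j = s k → j = k) (w : J → ℝ) :
    totalCompletion w (packedStart s M w) = ∑ j, tailCount s M j * w j := by
  simp only [totalCompletion, packedStart_add_eq_sum hinj, Finset.sum_filter]
  rw [Finset.sum_comm]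
  simp only [← Finset.sum_filter, Finset.sum_const, nsmul_eq_mul, tailCount, eq_comm]

lemma packedStart_add_le {w : J → ℝ} (hw : ∀ j, 0 ≤ w j) {j k : J} (hM : M j = M k)
    (hs : s j < s k) : packedStart s M w j + w j ≤ packedStart s M w k := by
  classical
  rw [packedStart, add_comm, ← Finset.sum_insert (by simp)]
  refine Finset.sum_le_sum_of_subset_of_nonneg (fun l => ?_) fun l _ _ => hw l
  simp only [Finset.mem_insert, Finset.mem_filter_univ]
  rintro (rfl | ⟨hl, hls⟩)
  exacts [⟨hM, hs⟩, ⟨hl.trans hM, hls.trans hs⟩]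

lemma continuous_packedStart (s : J → ℝ) (M : J → N) : Continuous (packedStart s M) := by
  unfold packedStart
  fun_prop

lemma packedStart_eq_zero {w : J → ℝ} (hs : ∀ j, 0 ≤ s j) {j : J} (hj : s j = 0) :
    packedStart s M w j = 0 := by
  have hempty : Finset.univ.filter (fun k => M k = M j ∧ s k < s j) = ∅ :=
    Finset.filter_false_of_mem fun k _ hk => by linarith [hs k, hk.2]
  rw [packedStart, hempty, Finset.sum_empty]

lemma PinnedOptimal.packedStart_eq (h : PinnedOptimal Z p r s M) (hp : ∀ j, 0 < p j)
    (hno : NoHandover p r s M) : packedStart s M p = s := by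
  have hinj (j k) (hM : M j = M k) (hs : s j = s k) : j = k := h.eq_of_start_eq hp (.inl hM) hs
  funext j
  induction j using (wellFounded_start_lt s).induction with
  | _ j ih =>
    rcases (h.start_nonneg j).eq_or_lt with hj | hj
    · rw [packedStart_eq_zero h.start_nonneg hj.symm, hj]
    · obtain ⟨k, hkM, hkj⟩ := h.exists_completion_eq_start hno hj
      have hlt : s k < s j := by linarith [hp k]
      have hpred : packedStart s M p j = packedStart s M p k + p k := by
        rw [packedStart_add_eq_sum hinj, packedStart]
        congr 1
        ext l
        simp only [Finset.mem_filter_univ, hkM, and_congr_right_iff]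
        refine fun hl => ⟨fun hlj => ?_, hlt.trans_le'⟩
        by_contra! hkl
        linarith [h.completion_le_of_start_lt (hp l) (.inl (hkM.trans hl.symm)) hkl]
      rw [hpred, ih k hlt, hkj]

-- Without handovers every resource constraint between different machines is slack, so small
-- changes of the processing times leave it intact.
lemma PinnedFeasible.eventually_packedStart (h : PinnedFeasible Z p r s M) (hp : ∀ j, 0 < p j)
    (hno : NoHandover p r s M) (hpacked : packedStart s M p = s) :
    ∀ᶠ w in 𝓝 p, PinnedFeasible Z w r (packedStart s M w) M := by
  have hpos : ∀ᶠ w in 𝓝 p, ∀ j, 0 < w j := eventually_all.2 fun j =>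
    (continuous_apply j).continuousAt.eventually_const_lt (hp j)
  have hcont (j : J) : Continuous fun w => packedStart s M w j :=
    (continuous_apply j).comp (continuous_packedStart s M)
  have hslack : ∀ᶠ w in 𝓝 p, ∀ j k, s j + p j < s k →
      packedStart s M w j + w j < packedStart s M w k :=
    eventually_all.2 fun j => eventually_all.2 fun k => eventually_imp_distrib_left.2 fun hjk =>
      ((hcont j).add (continuous_apply j)).continuousAt.eventually_lt (hcont k).continuousAt
        (by simpa only [Pi.add_apply, hpacked] using hjk)
  filter_upwards [hpos, hslack] with w hw hslack
  have hord (j k) (hc : Conflict r M j k) (hjk : s j + p j ≤ s k) :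
      packedStart s M w j + w j ≤ packedStart s M w k := by
    by_cases hM : M j = M k
    · exact packedStart_add_le (fun l => (hw l).le) hM (by linarith [hp j])
    · exact (hslack j k (hjk.lt_of_ne fun heq => hM (hno j k (hc.resolve_left hM) heq))).le
  exact ⟨fun j => Finset.sum_nonneg fun k _ => (hw k).le,
    fun j hj => packedStart_eq_zero h.start_nonneg (h.start_eq_zero j hj),
    fun j k hne hc => (h.completion_le_or j k hne hc).imp (hord j k hc) (hord k j hc.symm)⟩

lemma PinnedOptimal.totalCompletion_eq_sum (h : PinnedOptimal Z p r s M) (hp : ∀ j, 0 < p j)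
    (hno : NoHandover p r s M) : totalCompletion p s = ∑ j, tailCount s M j * p j := by
  rw [← totalCompletion_packedStart (fun j k hM => h.eq_of_start_eq hp (.inl hM)),
    h.packedStart_eq hp hno]

end Packed

/-! ### Functions with local affine majorants -/

section AffineMajorant

variable {f : ℝ → ℝ} {a b : ℝ}

lemma min_le_of_affine_majorant (hf : LowerSemicontinuousOn f (Set.Icc a b))
    (hmaj : ∀ t ∈ Set.Ioo a b, ∃ c, ∀ᶠ u in 𝓝 t, f u ≤ f t + c * (u - t)) {t : ℝ}
    (ht : t ∈ Set.Icc a b) : min (f a) (f b) ≤ f t := by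
  obtain ⟨x, hx, hxmin⟩ := hf.exists_isMinOn ⟨t, ht⟩ isCompact_Icc
  obtain ⟨y, ⟨hy, hyx : f y ≤ f x⟩, hylast⟩ :=
    (hf.isCompact_inter_preimage_Iic isCompact_Icc (f x)).exists_isGreatest
      ⟨x, hx, by simp⟩
  have hymin (u) (hu : u ∈ Set.Icc a b) : f y ≤ f u := hyx.trans (hxmin hu)
  rcases hy.1.eq_or_lt with rfl | hay
  · exact min_le_of_left_le (hymin t ht)
  rcases hy.2.eq_or_lt with rfl | hyb
  · exact min_le_of_right_le (hymin t ht)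
  obtain ⟨c, hc⟩ := hmaj y ⟨hay, hyb⟩
  obtain ⟨u, hu, hau, huy⟩ :=
    ((hc.filter_mono nhdsWithin_le_nhds).and (Ioo_mem_nhdsLT hay)).exists
  have hc_nonpos : c ≤ 0 := by nlinarith [hymin u ⟨hau.le, (huy.trans hyb).le⟩]
  obtain ⟨v, hv, hyv, hvb⟩ :=
    ((hc.filter_mono nhdsWithin_le_nhds).and (Ioo_mem_nhdsGT hyb)).exists
  have hvx : f v ≤ f x := by nlinarith
  exact absurd (hylast ⟨⟨(hay.trans hyv).le, hvb.le⟩, hvx⟩) hyv.not_ge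

-- Subtracting the chord reduces this to the minimum principle above.
lemma le_add_mul_of_affine_majorant {c : ℝ} (hab : a < b)
    (hf : LowerSemicontinuousOn f (Set.Icc a b))
    (hmaj : ∀ t ∈ Set.Ioo a b, ∃ c, ∀ᶠ u in 𝓝 t, f u ≤ f t + c * (u - t))
    (ha : ∀ᶠ u in 𝓝[>] a, f u ≤ f a + c * (u - a)) : f b ≤ f a + c * (b - a) := by
  obtain ⟨m, hm⟩ : ∃ m, f b = f a + m * (b - a) :=
    ⟨(f b - f a) / (b - a), by field_simp [(sub_pos.2 hab).ne']; ring⟩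
  have hchord (t) (ht : t ∈ Set.Icc a b) : f a ≤ f t + -m * (t - a) := by
    have hmin := min_le_of_affine_majorant (f := fun t => f t + -m * (t - a))
      (hf.add (Continuous.continuousOn (by fun_prop)).lowerSemicontinuousOn) (fun t ht => ?_) ht
    · simpa [hm] using hmin
    · obtain ⟨c, hc⟩ := hmaj t ht
      exact ⟨c - m, hc.mono fun u hu => by linarith⟩
  obtain ⟨u, hu, hau, hub⟩ := (ha.and (Ioo_mem_nhdsGT hab)).exists
  have hmc : m ≤ c := by nlinarith [hchord u ⟨hau.le, hub.le⟩]
  nlinarith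

end AffineMajorant

/-! ### The optimal value as a function of the processing times -/

/-- The infimum of the total completion times of the feasible schedules with processing times `w`
and pinned jobs `Z`. -/
noncomputable def optValue (N : Type*) [Fintype J] (Z : Set J) (r : J → R) (w : J → ℝ) : ℝ :=
  sInf {c | ∃ (s : J → ℝ) (M : J → N), PinnedFeasible Z w r s M ∧ totalCompletion w s = c}

lemma isClosed_setOf_pinnedFeasible [Finite J] [Finite N] (Z : Set J) (r : J → R) :
    IsClosed {x : (J → ℝ) × (J → ℝ) | ∃ M : J → N, PinnedFeasible Z x.1 r x.2 M} := by
  simp only [Set.ofPred_exists]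
  refine isClosed_iUnion_of_finite fun M => ?_
  have hset : {x : (J → ℝ) × (J → ℝ) | PinnedFeasible Z x.1 r x.2 M} =
      {x | (∀ j, 0 ≤ x.2 j) ∧ (∀ j ∈ Z, x.2 j = 0) ∧ ∀ j k, j ≠ k → Conflict r M j k →
        x.2 j + x.1 j ≤ x.2 k ∨ x.2 k + x.1 k ≤ x.2 j} :=
    Set.ext fun x => ⟨fun h => ⟨h.1, h.2, h.3⟩, fun h => ⟨h.1, h.2.1, h.2.2⟩⟩
  rw [hset]
  simp only [Set.ofPred_and, Set.ofPred_forall, Set.ofPred_or]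
  refine .inter (isClosed_iInter fun j => isClosed_le (by fun_prop) (by fun_prop))
    (.inter ?_ ?_)
  · exact isClosed_iInter fun j => isClosed_iInter fun _ => isClosed_eq (by fun_prop) (by fun_prop)
  · refine isClosed_iInter fun j => isClosed_iInter fun k => isClosed_iInter fun _ =>
      isClosed_iInter fun _ => .union ?_ ?_ <;> exact isClosed_le (by fun_prop) (by fun_prop)

lemma PinnedFeasible.exists_pinnedFeasible [Finite J] (h : PinnedFeasible Z p r s M)
    (hp : ∀ j, 0 < p j) (hq : ∀ j, 0 < q j) : ∃ s', PinnedFeasible Z q r s' M := by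
  have := Fintype.ofFinite J
  have hratio (j : J) : 0 ≤ q j / p j := (div_pos (hq j) (hp j)).le
  refine ⟨_, h.smul (c := ∑ j, q j / p j) (Finset.sum_nonneg fun j _ => hratio j) fun j => ?_⟩
  rw [← div_le_iff₀ (hp j)]
  exact Finset.single_le_sum (fun k _ => hratio k) (Finset.mem_univ j)

lemma lineMap_apply_pos (hp : ∀ j, 0 < p j) (hq : ∀ j, 0 < q j) {t : ℝ}
    (ht : t ∈ Set.Icc (0 : ℝ) 1) (j : J) : 0 < (AffineMap.lineMap p q t : J → ℝ) j := by
  simpa [AffineMap.lineMap_apply] using (convex_Ioi (0 : ℝ)).lineMap_mem (hp j) (hq j) ht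

section OptValue

variable [Fintype J]

lemma PinnedFeasible.optValue_le (h : PinnedFeasible Z p r s M) (hp : ∀ j, 0 ≤ p j) :
    optValue N Z r p ≤ totalCompletion p s := by
  refine csInf_le ⟨0, ?_⟩ ⟨s, M, h, rfl⟩
  rintro _ ⟨s', M', h', rfl⟩
  exact Finset.sum_nonneg fun j _ => add_nonneg (h'.start_nonneg j) (hp j)

lemma PinnedOptimal.optValue_eq (h : PinnedOptimal Z p r s M) :
    optValue N Z r p = totalCompletion p s := by
  refine IsLeast.csInf_eq ⟨⟨s, M, h.toPinnedFeasible, rfl⟩, ?_⟩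
  rintro _ ⟨s', M', h', rfl⟩
  exact h.totalCompletion_le s' M' h'

lemma continuous_totalCompletion :
    Continuous fun x : (J → ℝ) × (J → ℝ) => totalCompletion x.1 x.2 := by
  unfold totalCompletion
  fun_prop

lemma isCompact_setOf_totalCompletion_le [Finite N] (Z : Set J) (r : J → R) {A : Set (J → ℝ)}
    (hA : IsCompact A) (hpos : ∀ w ∈ A, ∀ j, 0 ≤ w j) (c : ℝ) :
    IsCompact {x : (J → ℝ) × (J → ℝ) | x.1 ∈ A ∧ (∃ M : J → N, PinnedFeasible Z x.1 r x.2 M) ∧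
      totalCompletion x.1 x.2 ≤ c} := by
  refine (hA.prod (isCompact_Icc (a := (0 : J → ℝ)) (b := fun _ => c))).of_isClosed_subset
    ((hA.isClosed.preimage continuous_fst).inter ((isClosed_setOf_pinnedFeasible Z r).inter
      (isClosed_le continuous_totalCompletion continuous_const))) ?_
  rintro ⟨w, s⟩ ⟨hw, ⟨M, hM⟩, hle⟩
  refine ⟨hw, hM.start_nonneg, fun j => ?_⟩
  calc s j ≤ s j + w j := le_add_of_nonneg_right (hpos w hw j)
    _ ≤ totalCompletion w s := Finset.single_le_sum (f := fun j => s j + w j)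
        (fun k _ => add_nonneg (hM.start_nonneg k) (hpos w hw k)) (Finset.mem_univ j)
    _ ≤ c := hle

lemma PinnedFeasible.exists_pinnedOptimal [Finite N] (h : PinnedFeasible Z p r s M)
    (hp : ∀ j, 0 < p j) :
    ∃ (s' : J → ℝ) (M' : J → N), PinnedOptimal Z p r s' M' ∧ NoHandover p r s' M' := by
  have hcpt := isCompact_setOf_totalCompletion_le (N := N) Z r (isCompact_singleton (x := p))
    (by rintro _ rfl j; exact (hp j).le) (totalCompletion p s)
  obtain ⟨⟨w, s'⟩, ⟨hw : w = p, ⟨M₀, hM₀⟩, hle⟩, hmin⟩ :=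
    hcpt.exists_isMinOn ⟨(p, s), rfl, ⟨M, h⟩, le_rfl⟩ continuous_totalCompletion.continuousOn
  subst hw
  obtain ⟨M', hM', hno⟩ := hM₀.exists_noHandover hp
  refine ⟨s', M', ⟨hM', fun s₁ M₁ h₁ => ?_⟩, hno⟩
  rcases le_total (totalCompletion w s₁) (totalCompletion w s) with hs₁ | hs₁
  · exact hmin (show (w, s₁) ∈ _ from ⟨rfl, ⟨M₁, h₁⟩, hs₁⟩)
  · exact hle.trans hs₁

lemma PinnedFeasible.lowerSemicontinuousOn_optValue [Finite N] (h : PinnedFeasible Z p r s M)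
    (hp : ∀ j, 0 < p j) {A : Set (J → ℝ)} (hA : IsCompact A) (hpos : ∀ w ∈ A, ∀ j, 0 < w j) :
    LowerSemicontinuousOn (optValue N Z r) A := by
  refine lowerSemicontinuousOn_iff_preimage_Iic.2 fun c => ?_
  have hcpt := (isCompact_setOf_totalCompletion_le (N := N) Z r hA
    (fun w hw j => (hpos w hw j).le) c).image continuous_fst
  refine ⟨_, hcpt.isClosed, Set.ext fun w => ⟨fun ⟨hw, hwc⟩ => ⟨hw, ?_⟩, ?_⟩⟩
  · obtain ⟨s₀, h₀⟩ := h.exists_pinnedFeasible hp (hpos w hw)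
    obtain ⟨s', M', hopt, -⟩ := h₀.exists_pinnedOptimal (hpos w hw)
    exact ⟨(w, s'), ⟨hw, ⟨M', hopt.toPinnedFeasible⟩, hopt.optValue_eq ▸ hwc⟩, rfl⟩
  · rintro ⟨hw, ⟨w, s'⟩, ⟨-, ⟨M', h'⟩, hle⟩, rfl⟩
    exact ⟨hw, (h'.optValue_le fun j => (hpos w hw j).le).trans hle⟩

variable [DecidableEq N]

lemma PinnedOptimal.eventually_optValue_le (h : PinnedOptimal Z p r s M) (hp : ∀ j, 0 < p j)
    (hno : NoHandover p r s M) :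
    ∀ᶠ w in 𝓝 p, optValue N Z r w ≤ ∑ j, tailCount s M j * w j := by
  have hpos : ∀ᶠ w in 𝓝 p, ∀ j, 0 < w j := eventually_all.2 fun j =>
    (continuous_apply j).continuousAt.eventually_const_lt (hp j)
  filter_upwards [hpos, h.eventually_packedStart hp hno (h.packedStart_eq hp hno)] with w hw hfeas
  exact (hfeas.optValue_le fun j => (hw j).le).trans_eq
    (totalCompletion_packedStart (fun j k hM => h.eq_of_start_eq hp (.inl hM)) w)

lemma PinnedOptimal.eventually_optValue_lineMap_le {x y : J → ℝ} {t : ℝ}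
    (h : PinnedOptimal Z (AffineMap.lineMap x y t) r s M)
    (hpos : ∀ j, 0 < (AffineMap.lineMap x y t : J → ℝ) j)
    (hno : NoHandover (AffineMap.lineMap x y t) r s M) :
    ∀ᶠ u in 𝓝 t, optValue N Z r (AffineMap.lineMap x y u) ≤
      optValue N Z r (AffineMap.lineMap x y t) +
        (∑ j, tailCount s M j * (y j - x j)) * (u - t) := by
  have hcont : ContinuousAt (fun u => (AffineMap.lineMap x y u : J → ℝ)) t :=
    AffineMap.lineMap_continuous.continuousAt
  filter_upwards [hcont.eventually (h.eventually_optValue_le hpos hno)] with u hu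
  refine hu.trans_eq ?_
  rw [h.optValue_eq, h.totalCompletion_eq_sum hpos hno, Finset.sum_mul, ← Finset.sum_add_distrib]
  refine Finset.sum_congr rfl fun j _ => ?_
  simp only [AffineMap.lineMap_apply, vsub_eq_sub, vadd_eq_add, Pi.add_apply, Pi.smul_apply,
    Pi.sub_apply, smul_eq_mul]
  ring

-- Along the segment from `p` to `q` the optimal value is lower semicontinuous and has local affine
-- majorants, so the one at `p` is global.
lemma PinnedOptimal.optValue_le_sum [Finite N] (h : PinnedOptimal Z p r s M)
    (hp : ∀ j, 0 < p j) (hno : NoHandover p r s M) (hq : ∀ j, 0 < q j) :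
    optValue N Z r q ≤ ∑ j, tailCount s M j * q j := by
  let line (t : ℝ) : J → ℝ := AffineMap.lineMap p q t
  have hline_pos (t) (ht : t ∈ Set.Icc (0 : ℝ) 1) (j : J) : 0 < line t j :=
    lineMap_apply_pos hp hq ht j
  have hcont : Continuous line := AffineMap.lineMap_continuous
  have hlsc : LowerSemicontinuousOn (fun t => optValue N Z r (line t)) (Set.Icc 0 1) :=
    (h.lowerSemicontinuousOn_optValue hp (isCompact_Icc.image hcont)
      (by rintro _ ⟨t, ht, rfl⟩; exact hline_pos t ht)).comp hcont.continuousOn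
      (Set.mapsTo_image _ _)
  have hmaj (t) (ht : t ∈ Set.Ioo (0 : ℝ) 1) : ∃ c, ∀ᶠ u in 𝓝 t,
      optValue N Z r (line u) ≤ optValue N Z r (line t) + c * (u - t) := by
    have ht := Set.Ioo_subset_Icc_self ht
    obtain ⟨s₀, h₀⟩ := h.exists_pinnedFeasible hp (hline_pos t ht)
    obtain ⟨s', M', hopt, hno'⟩ := h₀.exists_pinnedOptimal (hline_pos t ht)
    exact ⟨_, hopt.eventually_optValue_lineMap_le (hline_pos t ht) hno'⟩
  have hline_zero : line 0 = p := AffineMap.lineMap_apply_zero p q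
  have hline_one : line 1 = q := AffineMap.lineMap_apply_one p q
  have hopt_zero : PinnedOptimal Z (line 0) r s M := by rwa [hline_zero]
  have hbound := le_add_mul_of_affine_majorant zero_lt_one hlsc hmaj
    ((hopt_zero.eventually_optValue_lineMap_le (hline_pos 0 (by simp))
      (show NoHandover (line 0) r s M by rwa [hline_zero])).filter_mono nhdsWithin_le_nhds)
  rw [hline_one, hline_zero, h.optValue_eq, h.totalCompletion_eq_sum hp hno, sub_zero, mul_one,
    ← Finset.sum_add_distrib] at hbound
  exact hbound.trans_eq (Finset.sum_congr rfl fun j _ => by ring)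

lemma PinnedOptimal.exists_totalCompletion_le [Finite N] (h : PinnedOptimal Z p r s M)
    (hp : ∀ j, 0 < p j) (hno : NoHandover p r s M) (hq : ∀ j, 0 < q j) :
    ∃ (s' : J → ℝ) (M' : J → N), PinnedFeasible Z q r s' M' ∧
      totalCompletion q s' ≤ ∑ j, tailCount s M j * q j := by
  obtain ⟨s₀, h₀⟩ := h.exists_pinnedFeasible hp hq
  obtain ⟨s', M', hopt, -⟩ := h₀.exists_pinnedOptimal hq
  exact ⟨s', M', hopt.toPinnedFeasible, hopt.optValue_eq ▸ h.optValue_le_sum hp hno hq⟩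

end OptValue

/-! ### Exchanging the processing times of jobs with the same resource -/

lemma sum_mul_comp_swap [Fintype J] [DecidableEq J] (f g : J → ℝ) (i j : J) :
    ∑ k, f k * g (Equiv.swap i j k) = ∑ k, f k * g k + (f i - f j) * (g j - g i) := by
  have hswap (k) : g (Equiv.swap i j k) =
      g k + (if k = i then g j - g i else 0) - (if k = j then g j - g i else 0) := by
    rw [Equiv.swap_apply_def]
    grind
  simp only [hswap, mul_add, mul_sub, Finset.sum_add_distrib, Finset.sum_sub_distrib,
    mul_ite, mul_zero, Finset.sum_ite_eq', Finset.mem_univ, if_true]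
  ring

namespace PinnedOptimal

variable [Fintype J] [Finite N] [DecidableEq N]

lemma sum_le_sum_comp (h : PinnedOptimal Z p r s M) (hp : ∀ j, 0 < p j) (hno : NoHandover p r s M)
    {e : Equiv.Perm J} (hZ : e ⁻¹' Z = Z) (hr : r ∘ e = r) :
    ∑ j, tailCount s M j * p j ≤ ∑ j, tailCount s M j * p (e.symm j) := by
  obtain ⟨s', M', h', hle⟩ :=
    h.exists_totalCompletion_le hp hno (q := p ∘ e.symm) fun j => hp (e.symm j)
  have hcomp : PinnedFeasible Z p r (s' ∘ e) (M' ∘ e) := by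
    have := h'.comp_equiv e
    rwa [hZ, hr, Function.comp_assoc, e.symm_comp_self] at this
  calc ∑ j, tailCount s M j * p j
    _ = totalCompletion p s := (h.totalCompletion_eq_sum hp hno).symm
    _ ≤ totalCompletion p (s' ∘ e) := h.totalCompletion_le _ _ hcomp
    _ = totalCompletion (p ∘ e.symm) s' := by
      simpa [totalCompletion] using Equiv.sum_comp e fun j => s' j + p (e.symm j)
    _ ≤ ∑ j, tailCount s M j * p (e.symm j) := hle

lemma tailCount_le_tailCount (h : PinnedOptimal ∅ p r s M) (hp : ∀ j, 0 < p j)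
    (hno : NoHandover p r s M) {i j : J} (hr : r i = r j) (hlt : p i < p j) :
    tailCount s M j ≤ tailCount s M i := by
  classical
  have hswap : r ∘ Equiv.swap i j = r := by
    funext k
    rw [Function.comp_apply, Equiv.swap_apply_def]
    grind
  have hle := h.sum_le_sum_comp hp hno Set.preimage_empty hswap
  rw [Equiv.symm_swap, sum_mul_comp_swap] at hle
  exact_mod_cast (by nlinarith : (tailCount s M j : ℝ) ≤ tailCount s M i)

end PinnedOptimal

/-! ### Cutting a schedule into a head and a tail -/

/-- The jobs of the tail instance left when the jobs of `H` are removed. On each machine one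
additional block job, to be pinned at time `0`, stands for the time occupied by removed jobs. -/
abbrev TailJob (H : Finset J) (N : Type*) : Type _ :=
  {j // j ∉ H} ⊕ N

/-- Data of the tail instance: `f` on the jobs outside `H` and `g` on the block jobs. -/
abbrev tailElim {α : Type*} (H : Finset J) (f : J → α) (g : N → α) : TailJob H N → α :=
  Sum.elim (fun j => f j) g

/-- The schedule data equal to `f` on the jobs of `H` and to `g` on the tail. -/
def glue {α : Type*} [DecidableEq J] (H : Finset J) (f : J → α) (g : {j // j ∉ H} → α) (j : J) :
    α :=
  if h : j ∈ H then f j else g ⟨j, h⟩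

/-- `(s, M)` is a feasible schedule of the jobs of `H` that can precede every feasible schedule of
the tail instance whose block on machine `k` has length `z k ≥ b` and resource `ρ k`. -/
structure HeadFits (H : Finset J) (p : J → ℝ) (r : J → R) (ρ : N → R) (b : ℝ) (z : N → ℝ)
    (s : J → ℝ) (M : J → N) : Prop where
  start_nonneg : ∀ j ∈ H, 0 ≤ s j
  completion_le_or : ∀ j ∈ H, ∀ k ∈ H, j ≠ k → Conflict r M j k →
    s j + p j ≤ s k ∨ s k + p k ≤ s j
  completion_le_block : ∀ j ∈ H, s j + p j ≤ z (M j)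
  completion_le_or_exists_block : ∀ j ∈ H, s j + p j ≤ b ∨ ∃ k, ρ k = r j ∧ s j + p j ≤ z k
  le_block : ∀ k, b ≤ z k

/-- The jobs of `H` start by time `b > 0` and all other jobs not before `b`. On each machine `k`,
`last k` is the job of `H` that starts last, and it occupies the machine up to time `b`. -/
structure IsCut (p s : J → ℝ) (M : J → N) (H : Finset J) (b : ℝ) (last : N → J) : Prop where
  pos : 0 < b
  start_le : ∀ j ∈ H, s j ≤ b
  le_start : ∀ j ∉ H, b ≤ s j
  last_mem : ∀ k, last k ∈ H
  machine_last : ∀ k, M (last k) = k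
  le_completion_last : ∀ k, b ≤ s (last k) + p (last k)
  start_le_start_last : ∀ j ∈ H, s j ≤ s (last (M j))

variable {H : Finset J} {ρ : N → R} {b : ℝ} {z : N → ℝ} {σ : TailJob H N → ℝ} {μ : TailJob H N → N}

namespace PinnedFeasible

lemma injective_block_machine
    (htail : PinnedFeasible (Set.range Sum.inr) (tailElim H p z) (tailElim H r ρ) σ μ)
    (hz : ∀ k, 0 < z k) : Function.Injective fun k => μ (.inr k) := by
  intro k l hkl
  by_contra hne
  have hk := htail.start_eq_zero (.inr k) ⟨k, rfl⟩
  have hl := htail.start_eq_zero (.inr l) ⟨l, rfl⟩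
  have hor := htail.completion_le_or (.inr k) (.inr l) (Sum.inr_injective.ne hne) (.inl hkl)
  simp only [Sum.elim_inr, hk, hl] at hor
  rcases hor with h | h <;> linarith [hz k, hz l]

lemma block_le_start
    (htail : PinnedFeasible (Set.range Sum.inr) (tailElim H p z) (tailElim H r ρ) σ μ)
    {j : {j // j ∉ H}} (hj : 0 < p j) {k : N} (hc : μ (.inr k) = μ (.inl j) ∨ ρ k = r j) :
    z k ≤ σ (.inl j) := by
  have hk := htail.start_eq_zero (.inr k) ⟨k, rfl⟩
  have hor := htail.completion_le_or (.inr k) (.inl j) Sum.inr_ne_inl hc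
  simp only [Sum.elim_inr, Sum.elim_inl, hk, zero_add] at hor
  exact hor.resolve_right (by linarith [htail.start_nonneg (.inl j)])

end PinnedFeasible

lemma HeadFits.completion_le_start [Finite N] (h : HeadFits H p r ρ b z s M)
    (htail : PinnedFeasible (Set.range Sum.inr) (tailElim H p z) (tailElim H r ρ) σ μ)
    (hz : ∀ k, 0 < z k) {i : J} (hi : i ∈ H) {j : {j // j ∉ H}} (hj : 0 < p j)
    (hc : μ (.inr (M i)) = μ (.inl j) ∨ r i = r j) : s i + p i ≤ σ (.inl j) := by
  rcases hc with hM | hr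
  · exact (h.completion_le_block i hi).trans (htail.block_le_start hj (.inl hM))
  rcases h.completion_le_or_exists_block i hi with hib | ⟨k, hk, hik⟩
  · obtain ⟨k, hk⟩ := Finite.surjective_of_injective (htail.injective_block_machine hz) (μ (.inl j))
    exact (hib.trans (h.le_block k)).trans (htail.block_le_start hj (.inl hk))
  · exact hik.trans (htail.block_le_start hj (.inr (hk.trans hr)))

section Glue

variable [DecidableEq J]

lemma glue_of_mem {α : Type*} {f : J → α} {g : {j // j ∉ H} → α} {j : J} (hj : j ∈ H) :
    glue H f g j = f j :=
  dif_pos hj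

lemma glue_of_notMem {α : Type*} {f : J → α} {g : {j // j ∉ H} → α} {j : J} (hj : j ∉ H) :
    glue H f g j = g ⟨j, hj⟩ :=
  dif_neg hj

lemma HeadFits.pinnedFeasible_glue [Finite N] (h : HeadFits H p r ρ b z s M)
    (htail : PinnedFeasible (Set.range Sum.inr) (tailElim H p z) (tailElim H r ρ) σ μ)
    (hb : 0 < b) (hp : ∀ j, 0 < p j) :
    PinnedFeasible ∅ p r (glue H s fun j => σ (.inl j))
      (glue H (fun j => μ (.inr (M j))) fun j => μ (.inl j)) := by
  have hz (k : N) : 0 < z k := hb.trans_le (h.le_block k)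
  refine ⟨fun j => ?_, by simp, fun i j hne hc => ?_⟩
  · by_cases hj : j ∈ H
    · simpa only [glue_of_mem hj] using h.start_nonneg j hj
    · simpa only [glue_of_notMem hj] using htail.start_nonneg _
  unfold Conflict at hc
  by_cases hi : i ∈ H <;> by_cases hj : j ∈ H <;>
    simp only [glue_of_mem, glue_of_notMem, hi, hj, not_false_eq_true] at hc ⊢
  · exact h.completion_le_or i hi j hj hne (hc.imp_left (htail.injective_block_machine hz ·))
  · exact .inl (h.completion_le_start htail hz hi (hp j) hc)
  · exact .inr (h.completion_le_start htail hz hj (hp i) (hc.imp Eq.symm Eq.symm))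
  · exact htail.completion_le_or (.inl ⟨i, hi⟩) (.inl ⟨j, hj⟩)
      (Sum.inl_injective.ne (by simpa using hne)) hc

lemma totalCompletion_glue [Fintype J] [Fintype N] (hσ : ∀ k, σ (.inr k) = 0) :
    totalCompletion p (glue H s fun j => σ (.inl j)) + ∑ k, z k =
      ∑ j ∈ H, (s j + p j) + totalCompletion (tailElim H p z) σ := by
  have hhead : ∑ j ∈ H, (glue H s (fun j => σ (.inl j)) j + p j) = ∑ j ∈ H, (s j + p j) :=
    Finset.sum_congr rfl fun j hj => by rw [glue_of_mem hj]
  have htail : ∑ j ∈ Hᶜ, (glue H s (fun j => σ (.inl j)) j + p j) =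
      ∑ j : {j // j ∉ H}, (σ (.inl j) + p j) := by
    rw [Finset.sum_subtype _ fun _ => Finset.mem_compl]
    exact Finset.sum_congr rfl fun j _ => by rw [glue_of_notMem j.2]
  rw [totalCompletion, ← Finset.sum_add_sum_compl H, hhead, htail, totalCompletion,
    Fintype.sum_sum_type]
  simp only [Sum.elim_inl, Sum.elim_inr, hσ, zero_add, add_assoc]

lemma totalCompletion_add_sum [Fintype J] [Fintype N] (H : Finset J) (p s : J → ℝ) (z : N → ℝ) :
    totalCompletion p s + ∑ k, z k =
      ∑ j ∈ H, (s j + p j) + totalCompletion (tailElim H p z) (tailElim H s 0) := by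
  have hglue : glue H s (fun j => s j) = s := by
    funext j
    unfold glue
    split_ifs <;> rfl
  rw [← totalCompletion_glue (σ := tailElim H s 0) fun _ => rfl]
  simp only [Sum.elim_inl, hglue]

end Glue

namespace IsCut

variable {last : N → J}

lemma completion_le_start_last (hcut : IsCut p s M H b last) (h : PinnedFeasible Z p r s M)
    (hp : ∀ j, 0 < p j) {j : J} (hj : j ∈ H) (hne : j ≠ last (M j)) :
    s j + p j ≤ s (last (M j)) :=
  h.completion_le_of_start_le (hp _) hne (.inl (hcut.machine_last _).symm)
    (hcut.start_le_start_last j hj)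

lemma eq_last_or_completion_le (hcut : IsCut p s M H b last) (h : PinnedFeasible Z p r s M)
    (hp : ∀ j, 0 < p j) {j : J} (hj : j ∈ H) : j = last (M j) ∨ s j + p j ≤ b :=
  or_iff_not_imp_left.2 fun hne => (hcut.completion_le_start_last h hp hj hne).trans
    (hcut.start_le _ (hcut.last_mem _))

lemma completion_last_le_start (hcut : IsCut p s M H b last) (h : PinnedFeasible Z p r s M)
    (hp : ∀ j, 0 < p j) {j : J} {k : N} (hj : j ∉ H) (hc : k = M j ∨ r (last k) = r j) :
    s (last k) + p (last k) ≤ s j :=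
  h.completion_le_of_start_le (hp j) (ne_of_mem_of_not_mem (hcut.last_mem k) hj)
    (hc.imp_left (hcut.machine_last k).trans) ((hcut.start_le _ (hcut.last_mem k)).trans
      (hcut.le_start j hj))

lemma resource_last_injective (hcut : IsCut p s M H b last) (h : PinnedFeasible Z p r s M)
    (hno : NoHandover p r s M) : Function.Injective fun k => r (last k) := by
  intro k l hr
  by_contra hne
  have hlast : last k ≠ last l := fun heq => hne (by rw [← hcut.machine_last k, heq,
    hcut.machine_last l])
  have hstart (k) := hcut.start_le _ (hcut.last_mem k)
  apply hne
  rw [← hcut.machine_last k, ← hcut.machine_last l]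
  rcases h.completion_le_or _ _ hlast (.inr hr) with hle | hle
  · exact hno _ _ hr (hle.antisymm ((hstart l).trans (hcut.le_completion_last k)))
  · exact (hno _ _ hr.symm (hle.antisymm ((hstart k).trans (hcut.le_completion_last l)))).symm

lemma headFits (hcut : IsCut p s M H b last) (h : PinnedFeasible Z p r s M)
    (hp : ∀ j, 0 < p j) :
    HeadFits H p r (fun k => r (last k)) b (fun k => s (last k) + p (last k)) s M where
  start_nonneg j _ := h.start_nonneg j
  completion_le_or j _ k _ := h.completion_le_or j k
  completion_le_block j hj := by
    rcases hcut.eq_last_or_completion_le h hp hj with hlast | hle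
    · rw [← hlast]
    · exact hle.trans (hcut.le_completion_last _)
  completion_le_or_exists_block j hj :=
    (hcut.eq_last_or_completion_le h hp hj).symm.imp_right fun hlast =>
      ⟨M j, by simp only [← hlast, le_refl, and_self]⟩
  le_block := hcut.le_completion_last

lemma pinnedFeasible_tail (hcut : IsCut p s M H b last) (h : PinnedFeasible Z p r s M)
    (hp : ∀ j, 0 < p j) (hno : NoHandover p r s M) :
    PinnedFeasible (Set.range Sum.inr) (tailElim H p fun k => s (last k) + p (last k))
      (tailElim H r fun k => r (last k)) (tailElim H s 0) (tailElim H M id) where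
  start_nonneg := by
    rintro (j | _)
    exacts [h.start_nonneg j, le_rfl]
  start_eq_zero := by
    rintro _ ⟨k, rfl⟩
    rfl
  completion_le_or := by
    rintro (i | k) (j | l) hne hc <;> unfold Conflict at hc <;>
      simp only [Sum.elim_inl, Sum.elim_inr, Pi.zero_apply, zero_add, id_eq] at hc ⊢
    · exact h.completion_le_or i j (fun heq => hne (by rw [Subtype.ext heq])) hc
    · exact .inr (hcut.completion_last_le_start h hp i.2 (hc.imp Eq.symm Eq.symm))
    · exact .inl (hcut.completion_last_le_start h hp j.2 hc)
    · exact absurd (hc.elim id fun hr => hcut.resource_last_injective h hno hr)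
        (fun heq => hne (by rw [heq]))

lemma noHandover_tail (hcut : IsCut p s M H b last) (hs : ∀ j, 0 ≤ s j)
    (hp : ∀ j, 0 < p j) (hno : NoHandover p r s M) :
    NoHandover (tailElim H p fun k => s (last k) + p (last k))
      (tailElim H r fun k => r (last k)) (tailElim H s 0) (tailElim H M id) := by
  rintro (i | k) (j | _) hr heq <;>
    simp only [Sum.elim_inl, Sum.elim_inr, Pi.zero_apply, zero_add, id_eq] at hr heq ⊢
  · exact hno i j hr heq
  · linarith [hs i, hp i]
  · exact (hcut.machine_last k).symm.trans (hno _ _ hr heq)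
  · linarith [hcut.pos, hcut.le_completion_last k]

variable [Fintype J] [Fintype N]

lemma pinnedOptimal_tail [DecidableEq J] (hcut : IsCut p s M H b last) (h : PinnedOptimal ∅ p r s M)
    (hp : ∀ j, 0 < p j) (hno : NoHandover p r s M) :
    PinnedOptimal (Set.range Sum.inr) (tailElim H p fun k => s (last k) + p (last k))
      (tailElim H r fun k => r (last k)) (tailElim H s 0) (tailElim H M id) where
  toPinnedFeasible := hcut.pinnedFeasible_tail h.toPinnedFeasible hp hno
  totalCompletion_le σ μ hσ := by
    have hglue := (hcut.headFits h.toPinnedFeasible hp).pinnedFeasible_glue hσ hcut.pos hp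
    have hle := h.totalCompletion_le _ _ hglue
    have htotal := totalCompletion_glue (p := p) (s := s) (z := fun k => s (last k) + p (last k))
      fun k => hσ.start_eq_zero (.inr k) ⟨k, rfl⟩
    linarith [totalCompletion_add_sum H p s fun k => s (last k) + p (last k)]

variable [DecidableEq N]

lemma tailCount_tail [DecidableEq J] (hcut : IsCut p s M H b last) (h : PinnedFeasible Z p r s M)
    (hp : ∀ j, 0 < p j) (k : N) :
    tailCount (tailElim H s 0) (tailElim H M id) (.inr k) = tailCount s M (last k) := by
  refine Finset.card_bij (fun j _ => tailElim H id last j) ?_ ?_ ?_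
  · rintro (j | l) hj <;> rw [Finset.mem_filter_univ] at hj ⊢
    · rw [hcut.machine_last]
      exact ⟨hj.1, (hcut.start_le _ (hcut.last_mem k)).trans (hcut.le_start j j.2)⟩
    · obtain rfl : l = k := hj.1
      exact ⟨rfl, le_rfl⟩
  · rintro (i | k) _ (j | l) _ heq <;> simp only [Sum.elim_inl, Sum.elim_inr, id_eq] at heq
    · rw [Subtype.ext heq]
    · exact absurd (hcut.last_mem l) (heq ▸ i.2)
    · exact absurd (hcut.last_mem k) (heq ▸ j.2)
    · rw [← hcut.machine_last k, heq, hcut.machine_last l]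
  · intro j hj
    rw [Finset.mem_filter_univ, hcut.machine_last] at hj
    by_cases hjH : j ∈ H
    · have hlast : j = last k := h.eq_of_start_eq hp (.inl (by rw [hcut.machine_last, hj.1]))
        (le_antisymm (hj.1 ▸ hcut.start_le_start_last j hjH) hj.2)
      exact ⟨.inr k, Finset.mem_filter_univ _ |>.2 ⟨rfl, le_rfl⟩, hlast.symm⟩
    · exact ⟨.inl ⟨j, hjH⟩, Finset.mem_filter_univ _ |>.2 ⟨hj.1, h.start_nonneg j⟩, rfl⟩

lemma sum_head_le (hcut : IsCut p s M H b last) (h : PinnedOptimal ∅ p r s M)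
    (hp : ∀ j, 0 < p j) (hno : NoHandover p r s M) {s₁ : J → ℝ} {M₁ : J → N}
    (hfits : HeadFits H p r (fun k => r (last k)) b z s₁ M₁) :
    ∑ j ∈ H, s j + ∑ k, (tailCount s M (last k) - 1 : ℝ) * (s (last k) + p (last k)) ≤
      ∑ j ∈ H, s₁ j + ∑ k, (tailCount s M (last k) - 1 : ℝ) * z k := by
  classical
  have hpos {z : N → ℝ} (hz : ∀ k, b ≤ z k) : ∀ j, 0 < tailElim H p z j := by
    rintro (j | k)
    exacts [hp j, hcut.pos.trans_le (hz k)]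
  have htail := hcut.pinnedOptimal_tail h hp hno
  have hno_tail := hcut.noHandover_tail h.start_nonneg hp hno
  have hvalue := htail.totalCompletion_eq_sum (hpos hcut.le_completion_last) hno_tail
  obtain ⟨σ, μ, hσ, hle⟩ := htail.exists_totalCompletion_le (hpos hcut.le_completion_last)
    hno_tail (hpos hfits.le_block)
  have hglue := h.totalCompletion_le _ _ (hfits.pinnedFeasible_glue hσ hcut.pos hp)
  have htotal := totalCompletion_glue (p := p) (s := s₁) (z := z)
    fun k => hσ.start_eq_zero (.inr k) ⟨k, rfl⟩
  have hbase := totalCompletion_add_sum H p s fun k => s (last k) + p (last k)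
  simp only [Fintype.sum_sum_type, Sum.elim_inl, Sum.elim_inr,
    hcut.tailCount_tail h.toPinnedFeasible hp] at hvalue hle
  simp only [sub_mul, one_mul, Finset.sum_sub_distrib]
  simp only [Finset.sum_add_distrib (s := H)] at htotal hbase
  linarith

end IsCut

/-! ### Moving the last job of a machine in front of the last job of another machine -/

/-- The start times after moving job `i` to the start of job `j`, which is delayed by `t`. -/
def exchangeStart [DecidableEq J] (s : J → ℝ) (i j : J) (t : ℝ) : J → ℝ :=
  s + Pi.single i (s j - s i) + Pi.single j t

/-- The machines after the exchange: `j` stays, `i` moves to where the jobs preceding `j` go, and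
`π` acts on the machines of all other jobs. -/
def exchangeMachine [DecidableEq J] (M : J → N) (π : Equiv.Perm N) (i j x : J) : N :=
  if x = j then M j else if x = i then π (M j) else π (M x)

/-- The lengths of the blocks after the exchange of a job on machine `k` with a later one on
machine `l`. -/
def exchangeBlock [DecidableEq N] (z : N → ℝ) (k l : N) (t : ℝ) : N → ℝ :=
  z + Pi.single k t - Pi.single l t

/-- The jobs `i` and `j` are last on their machines and `i` can start together with `j` as far as
its resource is concerned. If `i` fits before its old start time, then it is inserted in front of
`j`, which is delayed by `t = p i`. Otherwise `j` is delayed to the old start time of `i`, and the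
jobs preceding `i` and `j` exchange their machines. -/
structure IsExchange [DecidableEq N] (p : J → ℝ) (r : J → R) (s : J → ℝ) (M : J → N)
    (H : Finset J) (last : N → J) (i j : J) (π : Equiv.Perm N) (t : ℝ) : Prop where
  last_left : last (M i) = i
  last_right : last (M j) = j
  machine_ne : M i ≠ M j
  completion_le : ∀ x ∈ H, x ≠ i → r x = r i → s x + p x ≤ s j
  delay_nonneg : 0 ≤ t
  delay_le : t ≤ p i
  add_delay_le : s j + t ≤ s i
  perm : π = 1 ∧ t = p i ∨ π = Equiv.swap (M i) (M j) ∧ s j + t = s i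

section ExchangeStart

variable [DecidableEq J] {i j : J} {t : ℝ} {π : Equiv.Perm N}

lemma exchangeStart_left (hij : i ≠ j) : exchangeStart s i j t i = s j := by
  simp [exchangeStart, hij]

lemma exchangeStart_right (hij : i ≠ j) : exchangeStart s i j t j = s j + t := by
  simp [exchangeStart, hij.symm]

lemma exchangeStart_of_ne {x : J} (hi : x ≠ i) (hj : x ≠ j) : exchangeStart s i j t x = s x := by
  simp [exchangeStart, hi, hj]

lemma exchangeMachine_left (hij : i ≠ j) : exchangeMachine M π i j i = π (M j) := by
  simp [exchangeMachine, hij]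

lemma exchangeMachine_right : exchangeMachine M π i j j = M j := by
  simp [exchangeMachine]

lemma exchangeMachine_of_ne {x : J} (hi : x ≠ i) (hj : x ≠ j) :
    exchangeMachine M π i j x = π (M x) := by
  simp [exchangeMachine, hi, hj]

lemma sum_exchangeStart (hi : i ∈ H) (hj : j ∈ H) :
    ∑ x ∈ H, exchangeStart s i j t x = ∑ x ∈ H, s x + (s j - s i) + t := by
  simp [exchangeStart, Finset.sum_add_distrib, hi, hj]

end ExchangeStart

lemma exchangeBlock_of_ne [DecidableEq N] {k l x : N} {t : ℝ} (hk : x ≠ k) (hl : x ≠ l) :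
    exchangeBlock z k l t x = z x := by
  simp [exchangeBlock, hk, hl]

lemma sum_mul_exchangeBlock [Fintype N] [DecidableEq N] (c : N → ℝ) (k l : N) (t : ℝ) :
    ∑ x, c x * exchangeBlock z k l t x = ∑ x, c x * z x + (c k - c l) * t := by
  simp only [exchangeBlock, Pi.sub_apply, Pi.add_apply, Pi.single_apply, mul_sub, mul_add, mul_ite,
    mul_zero, Finset.sum_sub_distrib, Finset.sum_add_distrib, Finset.sum_ite_eq', Finset.mem_univ,
    if_true]
  ring

lemma IsCut.completion_le_start_last_of_conflict {last : N → J} (hcut : IsCut p s M H b last)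
    (h : PinnedFeasible Z p r s M) (hp : ∀ j, 0 < p j) (hno : NoHandover p r s M) {x : J} {k : N}
    (hx : x ∈ H) (hne : x ≠ last k) (hc : Conflict r M x (last k)) : s x + p x ≤ s (last k) := by
  refine (h.completion_le_or x (last k) hne hc).resolve_right fun hle => ?_
  have heq : s (last k) + p (last k) = s x :=
    hle.antisymm ((hcut.start_le x hx).trans (hcut.le_completion_last k))
  have hM : M x = k := by
    rw [← hcut.machine_last k]
    exact hc.elim id fun hr => (hno _ _ hr.symm heq).symm
  linarith [hM ▸ hcut.start_le_start_last x hx, hp (last k)]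

namespace IsExchange

variable [DecidableEq N] {last : N → J} {i j : J} {π : Equiv.Perm N} {t : ℝ}

lemma ne (hex : IsExchange p r s M H last i j π t) : i ≠ j :=
  fun hij => hex.machine_ne (congrArg M hij)

lemma perm_apply_of_ne (hex : IsExchange p r s M H last i j π t) {k : N} (hi : k ≠ M i)
    (hj : k ≠ M j) : π k = k := by
  rcases hex.perm with ⟨rfl, -⟩ | ⟨rfl, -⟩
  exacts [rfl, Equiv.swap_apply_of_ne_of_ne hi hj]

lemma exchangeBlock_left (hex : IsExchange p r s M H last i j π t) :
    exchangeBlock z (M j) (M i) t (M i) = z (M i) - t := by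
  simp [exchangeBlock, hex.machine_ne]

lemma exchangeBlock_right (hex : IsExchange p r s M H last i j π t) :
    exchangeBlock z (M j) (M i) t (M j) = z (M j) + t := by
  simp [exchangeBlock, hex.machine_ne.symm]

lemma le_exchangeBlock (hex : IsExchange p r s M H last i j π t)
    (hcut : IsCut p s M H (s i) last) (k : N) :
    s i ≤ exchangeBlock (fun k => s (last k) + p (last k)) (M j) (M i) t k := by
  by_cases hki : k = M i
  · rw [hki, hex.exchangeBlock_left, hex.last_left]
    linarith [hex.delay_le]
  by_cases hkj : k = M j
  · rw [hkj, hex.exchangeBlock_right]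
    exact le_add_of_le_of_nonneg (hcut.le_completion_last _) hex.delay_nonneg
  · rw [exchangeBlock_of_ne hkj hki]
    exact hcut.le_completion_last k

lemma completion_le_or_exchangeBlock_eq (hex : IsExchange p r s M H last i j π t)
    (hcut : IsCut p s M H b last) (h : PinnedFeasible Z p r s M) (hp : ∀ j, 0 < p j) {x : J}
    (hx : x ∈ H) (hxi : x ≠ i) (hxj : x ≠ j) :
    s x + p x ≤ b ∨ last (M x) = x ∧ π (M x) = M x ∧
      exchangeBlock (fun k => s (last k) + p (last k)) (M j) (M i) t (M x) = s x + p x := by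
  refine (hcut.eq_last_or_completion_le h hp hx).symm.imp_right fun hlast => ?_
  have hMi : M x ≠ M i := fun heq => hxi (by rw [hlast, heq, hex.last_left])
  have hMj : M x ≠ M j := fun heq => hxj (by rw [hlast, heq, hex.last_right])
  exact ⟨hlast.symm, hex.perm_apply_of_ne hMi hMj, by rw [exchangeBlock_of_ne hMj hMi, ← hlast]⟩

variable [DecidableEq J]

lemma completion_le_of_conflict_left (hex : IsExchange p r s M H last i j π t)
    (hcut : IsCut p s M H b last) (h : PinnedFeasible Z p r s M) (hp : ∀ j, 0 < p j) {x : J}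
    (hx : x ∈ H) (hxi : x ≠ i) (hxj : x ≠ j) (hc : Conflict r (exchangeMachine M π i j) x i) :
    s x + p x ≤ s j := by
  rcases hc with hM | hr
  · rw [exchangeMachine_of_ne hxi hxj, exchangeMachine_left hex.ne, π.injective.eq_iff] at hM
    have hlast : last (M x) = j := by rw [hM, hex.last_right]
    exact hlast ▸ hcut.completion_le_start_last h hp hx (hlast ▸ hxj)
  · exact hex.completion_le x hx hxi hr

lemma completion_le_of_conflict_right (hex : IsExchange p r s M H last i j π t)
    (hcut : IsCut p s M H b last) (h : PinnedFeasible Z p r s M) (hp : ∀ j, 0 < p j)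
    (hno : NoHandover p r s M) {x : J} (hx : x ∈ H) (hxi : x ≠ i) (hxj : x ≠ j)
    (hc : Conflict r (exchangeMachine M π i j) x j) : s x + p x ≤ s j + t := by
  have hbefore (hc : Conflict r M x j) : s x + p x ≤ s j + t := by
    rw [← hex.last_right] at hxj hc
    have hle := hcut.completion_le_start_last_of_conflict h hp hno hx hxj hc
    rw [hex.last_right] at hle
    exact hle.trans (le_add_of_nonneg_right hex.delay_nonneg)
  rcases hc with hM | hr
  · rw [exchangeMachine_of_ne hxi hxj, exchangeMachine_right] at hM
    rcases hex.perm with ⟨rfl, -⟩ | ⟨rfl, ht⟩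
    · exact hbefore (.inl hM)
    · rw [Equiv.swap_apply_eq_iff, Equiv.swap_apply_right] at hM
      have hlast : last (M x) = i := by rw [hM, hex.last_left]
      rw [ht]
      exact hlast ▸ hcut.completion_le_start_last h hp hx (hlast ▸ hxi)
  · exact hbefore (.inr hr)

lemma completion_le_of_conflict (hex : IsExchange p r s M H last i j π t)
    (hcut : IsCut p s M H b last) (hp : ∀ j, 0 < p j)
    (hc : Conflict r (exchangeMachine M π i j) i j) : s j + p i ≤ s j + t := by
  rcases hc with hM | hr
  · rw [exchangeMachine_left hex.ne, exchangeMachine_right] at hM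
    rcases hex.perm with ⟨rfl, rfl⟩ | ⟨rfl, -⟩
    · exact le_rfl
    · exact absurd (by rwa [Equiv.swap_apply_right] at hM) hex.machine_ne
  · have hj : j ∈ H := hex.last_right ▸ hcut.last_mem (M j)
    linarith [hex.completion_le j hj hex.ne.symm hr.symm, hp j]

lemma completion_le_or (hex : IsExchange p r s M H last i j π t)
    (hcut : IsCut p s M H b last) (h : PinnedFeasible Z p r s M) (hp : ∀ j, 0 < p j)
    (hno : NoHandover p r s M) {x y : J} (hx : x ∈ H) (hy : y ∈ H) (hne : x ≠ y)
    (hc : Conflict r (exchangeMachine M π i j) x y) :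
    exchangeStart s i j t x + p x ≤ exchangeStart s i j t y ∨
      exchangeStart s i j t y + p y ≤ exchangeStart s i j t x := by
  wlog hxi : x ≠ i generalizing x y
  · exact (this hy hx hne.symm hc.symm (by rintro rfl; exact hxi hne)).symm
  by_cases hyi : y = i
  · subst hyi
    rw [exchangeStart_left hex.ne]
    by_cases hxj : x = j
    · subst hxj
      rw [exchangeStart_right hex.ne]
      exact .inr (hex.completion_le_of_conflict hcut hp hc.symm)
    · rw [exchangeStart_of_ne hxi hxj]
      exact .inl (hex.completion_le_of_conflict_left hcut h hp hx hxi hxj hc)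
  wlog hxj : x ≠ j generalizing x y
  · exact (this hy hx hne.symm hc.symm hyi hxi (by rintro rfl; exact hxj hne)).symm
  rw [exchangeStart_of_ne hxi hxj]
  by_cases hyj : y = j
  · subst hyj
    rw [exchangeStart_right hex.ne]
    exact .inl (hex.completion_le_of_conflict_right hcut h hp hno hx hxi hxj hc)
  · rw [exchangeStart_of_ne hyi hyj]
    refine h.completion_le_or x y hne (hc.imp_left fun hM => ?_)
    rwa [exchangeMachine_of_ne hxi hxj, exchangeMachine_of_ne hyi hyj, π.injective.eq_iff] at hM

lemma completion_le_block (hex : IsExchange p r s M H last i j π t)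
    (hcut : IsCut p s M H (s i) last) (h : PinnedFeasible Z p r s M) (hp : ∀ j, 0 < p j) {x : J}
    (hx : x ∈ H) : exchangeStart s i j t x + p x ≤
      exchangeBlock (fun k => s (last k) + p (last k)) (M j) (M i) t
        (exchangeMachine M π i j x) := by
  by_cases hxi : x = i
  · rw [hxi, exchangeStart_left hex.ne, exchangeMachine_left hex.ne]
    rcases hex.perm with ⟨rfl, rfl⟩ | ⟨rfl, ht⟩
    · rw [Equiv.Perm.one_apply, hex.exchangeBlock_right, hex.last_right]
      linarith [hp j]
    · rw [Equiv.swap_apply_right, hex.exchangeBlock_left, hex.last_left]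
      linarith
  by_cases hxj : x = j
  · rw [hxj, exchangeStart_right hex.ne, exchangeMachine_right, hex.exchangeBlock_right,
      hex.last_right]
    linarith
  rw [exchangeStart_of_ne hxi hxj, exchangeMachine_of_ne hxi hxj]
  rcases hex.completion_le_or_exchangeBlock_eq hcut h hp hx hxi hxj with hle | ⟨-, hπ, hblock⟩
  · exact hle.trans (hex.le_exchangeBlock hcut _)
  · rw [hπ, hblock]

lemma completion_le_or_exists_block (hex : IsExchange p r s M H last i j π t)
    (hcut : IsCut p s M H b last) (h : PinnedFeasible Z p r s M) (hp : ∀ j, 0 < p j) {x : J}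
    (hx : x ∈ H) : exchangeStart s i j t x + p x ≤ b ∨ ∃ k, r (last k) = r x ∧
      exchangeStart s i j t x + p x ≤
        exchangeBlock (fun k => s (last k) + p (last k)) (M j) (M i) t k := by
  by_cases hxi : x = i
  · refine .inr ⟨M i, by rw [hex.last_left, hxi], ?_⟩
    rw [hxi, exchangeStart_left hex.ne, hex.exchangeBlock_left, hex.last_left]
    linarith [hex.add_delay_le]
  by_cases hxj : x = j
  · refine .inr ⟨M j, by rw [hex.last_right, hxj], ?_⟩
    rw [hxj, exchangeStart_right hex.ne, hex.exchangeBlock_right, hex.last_right]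
    linarith
  rw [exchangeStart_of_ne hxi hxj]
  exact (hex.completion_le_or_exchangeBlock_eq hcut h hp hx hxi hxj).imp_right
    fun ⟨hlast, _, hblock⟩ => ⟨M x, congrArg r hlast, hblock.ge⟩

lemma headFits (hex : IsExchange p r s M H last i j π t) (hcut : IsCut p s M H (s i) last)
    (h : PinnedFeasible Z p r s M) (hp : ∀ j, 0 < p j) (hno : NoHandover p r s M) :
    HeadFits H p r (fun k => r (last k)) (s i)
      (exchangeBlock (fun k => s (last k) + p (last k)) (M j) (M i) t)
      (exchangeStart s i j t) (exchangeMachine M π i j) where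
  start_nonneg x _ := by
    by_cases hxi : x = i
    · rw [hxi, exchangeStart_left hex.ne]
      exact h.start_nonneg j
    by_cases hxj : x = j
    · rw [hxj, exchangeStart_right hex.ne]
      exact add_nonneg (h.start_nonneg j) hex.delay_nonneg
    · rw [exchangeStart_of_ne hxi hxj]
      exact h.start_nonneg x
  completion_le_or _ hx _ hy := hex.completion_le_or hcut h hp hno hx hy
  completion_le_block _ hx := hex.completion_le_block hcut h hp hx
  completion_le_or_exists_block _ hx := hex.completion_le_or_exists_block hcut h hp hx
  le_block := hex.le_exchangeBlock hcut

end IsExchange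

-- The exchange lowers the start times by `s i - s j - t ≥ 0` in total, shortens the block of `i`
-- by `t` and lengthens that of `j` by `t`.
lemma IsCut.tailCount_le_tailCount [Fintype J] [Finite N] [DecidableEq N] {last : N → J} {i j : J}
    (hcut : IsCut p s M H (s i) last) (h : PinnedOptimal ∅ p r s M) (hp : ∀ j, 0 < p j)
    (hno : NoHandover p r s M) (hi : last (M i) = i) (hj : last (M j) = j) (hlt : s j < s i)
    (hM : M i ≠ M j) (hr : ∀ x ∈ H, x ≠ i → r x = r i → s x + p x ≤ s j) :
    tailCount s M i ≤ tailCount s M j := by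
  classical
  have := Fintype.ofFinite N
  obtain ⟨t, π, ht, hex⟩ : ∃ t π, 0 < t ∧ IsExchange p r s M H last i j π t := by
    rcases le_total (s j + p i) (s i) with hfit | hfit
    · exact ⟨p i, 1, hp i, hi, hj, hM, hr, (hp i).le, le_rfl, hfit, .inl ⟨rfl, rfl⟩⟩
    · have hdelay : s j + (s i - s j) = s i := add_sub_cancel _ _
      exact ⟨s i - s j, Equiv.swap (M i) (M j), sub_pos.2 hlt, hi, hj, hM, hr,
        sub_nonneg.2 hlt.le, by linarith, hdelay.le, .inr ⟨rfl, hdelay⟩⟩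
  have hle := hcut.sum_head_le h hp hno (hex.headFits hcut h.toPinnedFeasible hp hno)
  rw [sum_exchangeStart (hi ▸ hcut.last_mem _) (hj ▸ hcut.last_mem _), sum_mul_exchangeBlock,
    hi, hj] at hle
  exact_mod_cast (by nlinarith [hex.add_delay_le] :
    (tailCount s M i : ℝ) ≤ tailCount s M j)

/-! ### Inversions -/

/-- The jobs `i` and `j` violate the SPT order of their common resource: the longer job `i` starts
before the shorter job `j`. -/
structure IsInversion (p : J → ℝ) (r : J → R) (s : J → ℝ) (i j : J) : Prop where
  resource_eq : r i = r j
  lt : p j < p i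
  start_lt : s i < s j

namespace IsInversion

variable {i j : J}

lemma exists_adjacent [Finite J] (hinv : IsInversion p r s i j) :
    ∃ i j, IsInversion p r s i j ∧ ∀ x, r x = r j → s x < s j → s x ≤ s i := by
  obtain ⟨⟨i, j⟩, hij : IsInversion p r s i j, hmin⟩ := Set.exists_min_image
    {x : J × J | IsInversion p r s x.1 x.2} (fun x => s x.2 - s x.1) (Set.toFinite _)
    ⟨(i, j), hinv⟩
  refine ⟨i, j, hij, fun x hx hxj => ?_⟩
  by_contra! hix
  rcases lt_or_ge (p x) (p i) with hlt | hge
  · linarith [hmin (i, x) ⟨hij.resource_eq.trans hx.symm, hlt, hix⟩]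
  · linarith [hmin (x, j) ⟨hx, hij.lt.trans_le hge, hxj⟩]

lemma completion_lt_start (hinv : IsInversion p r s i j) (h : PinnedFeasible Z p r s M)
    (hp : ∀ j, 0 < p j) (hno : NoHandover p r s M) (hM : M i ≠ M j) : s i + p i < s j :=
  (h.completion_le_of_start_lt (hp j) (.inr hinv.resource_eq) hinv.start_lt).lt_of_ne
    fun heq => hM (hno i j hinv.resource_eq heq)

lemma completion_le_of_adjacent (hinv : IsInversion p r s i j) (h : PinnedFeasible Z p r s M)
    (hp : ∀ j, 0 < p j) (hadj : ∀ x, r x = r j → s x < s j → s x ≤ s i) {x : J} (hx : r x = r j)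
    (hxj : s x < s j) : s x + p x ≤ s i + p i := by
  have hc : Conflict r M x i := .inr (hx.trans hinv.resource_eq.symm)
  rcases (hadj x hx hxj).eq_or_lt with heq | hlt
  · rw [h.eq_of_start_eq hp hc heq]
  · linarith [h.completion_le_of_start_lt (hp i) hc hlt, hp i]

end IsInversion

-- A machine on which all jobs complete before time `s j` could start `j` earlier.
lemma PinnedOptimal.exists_straddling_start [Fintype J] {j : J} (h : PinnedOptimal ∅ p r s M)
    (hp : ∀ j, 0 < p j) (hno : NoHandover p r s M) (hj : 0 < s j)
    (hfree : ∀ x, r x = r j → s x < s j → s x + p x < s j) (n : N) :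
    ∃ x, M x = n ∧ s x < s j ∧ s j ≤ s x + p x := by
  by_contra! hgap
  have hbefore (x) (hx : M x = n) : s x < s j := by
    by_contra! hle
    obtain ⟨k, hk, hkj, hjk⟩ := h.exists_straddling hp hno hj x hle
    exact (hgap k (hk.trans hx) hkj).not_ge hjk
  obtain ⟨t, hbound, ht, htj : t < s j⟩ := ((eventually_nhdsLT_completion_le p s (s j)).and
    (((eventually_gt_nhds hj).filter_mono nhdsWithin_le_nhds).and self_mem_nhdsWithin)).exists
  refine htj.not_ge (h.start_le (n := n) (by simp) ht.le fun x hne hc => ?_)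
  rcases lt_or_ge (s x) (s j) with hlt | hge
  · exact .inl (hbound x (hc.elim (hgap x · hlt) (hfree x · hlt)))
  · have hr : r j = r x := (hc.resolve_left fun hx => (hbefore x hx).not_ge hge).symm
    exact .inr (by linarith [h.completion_le_of_start_le (hp x) hne.symm (.inr hr) hge])

lemma PinnedFeasible.exists_isCut [Finite J] {j : J} (h : PinnedFeasible Z p r s M)
    (hp : ∀ j, 0 < p j) (hj : 0 < s j)
    (hstraddle : ∀ n, ∃ x, M x = n ∧ s x < s j ∧ s j ≤ s x + p x) :
    ∃ H last, IsCut p s M H (s j) last ∧ (∀ x, x ∈ H ↔ x = j ∨ s x < s j) ∧ last (M j) = j ∧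
      ∀ n ≠ M j, s (last n) < s j := by
  classical
  choose f hfM hfj hjf using hstraddle
  let H := (Set.toFinite {x | x = j ∨ s x < s j}).toFinset
  have hmem (x) : x ∈ H ↔ x = j ∨ s x < s j := Set.Finite.mem_toFinset _
  have hle (x) (hx : x ∈ H) : s x ≤ s j := by
    rcases (hmem x).1 hx with rfl | hlt
    exacts [le_rfl, hlt.le]
  refine ⟨H, Function.update f (M j) j, ⟨hj, hle, fun x hx => ?_, fun n => ?_, fun n => ?_,
    fun n => ?_, fun x hx => ?_⟩, hmem, by simp, fun n hn => by simpa [hn] using hfj n⟩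
  · simp only [hmem, not_or, not_lt] at hx
    exact hx.2
  · by_cases hn : n = M j <;> simp [hmem, hn, hfj]
  · by_cases hn : n = M j <;> simp [hn, hfM]
  · by_cases hn : n = M j
    · simpa [hn] using (hp j).le
    · simpa [hn] using hjf n
  · by_cases hn : M x = M j
    · simpa [hn] using hle x hx
    · have hxj : s x < s j := ((hmem x).1 hx).resolve_left fun heq => hn (congrArg M heq)
      rw [Function.update_of_ne hn]
      by_contra! hlt
      linarith [h.completion_le_of_start_lt (hp x) (.inl (hfM (M x))) hlt, hjf (M x)]

lemma PinnedOptimal.not_isInversion [Fintype J] [Finite N] {i j : J} (h : PinnedOptimal ∅ p r s M)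
    (hp : ∀ j, 0 < p j) (hno : NoHandover p r s M) : ¬ IsInversion p r s i j := by
  classical
  intro hinv
  obtain ⟨i, j, hinv, hadj⟩ := hinv.exists_adjacent
  have hfeas := h.toPinnedFeasible
  have hij : tailCount s M i ≤ tailCount s M j :=
    h.tailCount_le_tailCount hp hno hinv.resource_eq.symm hinv.lt
  have hM : M i ≠ M j := fun heq => (tailCount_lt_tailCount heq hinv.start_lt).not_ge hij
  have hi_lt := hinv.completion_lt_start hfeas hp hno hM
  have hresource (x) (hx : r x = r j) (hxj : s x < s j) : s x + p x ≤ s i + p i :=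
    hinv.completion_le_of_adjacent hfeas hp hadj hx hxj
  have hj : 0 < s j := (h.start_nonneg i).trans_lt hinv.start_lt
  obtain ⟨H, last, hcut, hmem, hlast_j, hlast_lt⟩ := hfeas.exists_isCut hp hj
    (h.exists_straddling_start hp hno hj fun x hx hxj => (hresource x hx hxj).trans_lt hi_lt)
  have hMlast : M (last (M i)) = M i := hcut.machine_last _
  have hi_last : s i + p i ≤ s (last (M i)) := by
    refine hcut.completion_le_start_last hfeas hp ((hmem i).2 (.inr hinv.start_lt)) fun heq => ?_
    exact (hcut.le_completion_last (M i)).not_gt (heq ▸ hi_lt)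
  have hj_last : tailCount s M j ≤ tailCount s M (last (M i)) := by
    refine hcut.tailCount_le_tailCount h hp hno hlast_j (by rw [hMlast]) (hlast_lt _ hM)
      (hMlast.trans_ne hM).symm fun x hx hxj hxr => ?_
    exact (hresource x hxr (((hmem x).1 hx).resolve_left hxj)).trans hi_last
  have hlast_i : tailCount s M (last (M i)) < tailCount s M i :=
    tailCount_lt_tailCount hMlast.symm (by linarith [hp i])
  exact hlast_i.not_ge (hij.trans hj_last)

end Scheduling

/-- In an optimal schedule for `P|partition|ΣC_j`, all jobs sharing the same
resource are processed in SPT order: if `r j = r j'` and `p j < p j'` then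
`C j < C j'`. -/
theorem optimal_spt_order_per_resource {J R : Type} [Fintype J]
    (m : ℕ) (hm : 1 ≤ m) (p : J → ℝ) (hp : ∀ j, 0 < p j) (r : J → R)
    (s : J → ℝ) (M : J → Fin m) (hfeas : Feasible m p r s M)
    (hopt : ∀ (s' : J → ℝ) (M' : J → Fin m), Feasible m p r s' M' →
      ∑ j, (s j + p j) ≤ ∑ j, (s' j + p j)) :
    ∀ j j' : J, r j = r j' → p j < p j' → s j + p j < s j' + p j' := by
  intro j j' hr hlt
  obtain ⟨M', hfeas', hno⟩ := ((feasible_iff_pinnedFeasible_empty hp).1 hfeas).exists_noHandover hp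
  have hopt' : PinnedOptimal ∅ p r s M' :=
    ⟨hfeas', fun s' M'' h => hopt s' M'' ((feasible_iff_pinnedFeasible_empty hp).2 h)⟩
  by_contra! hle
  exact hopt'.not_isInversion hp hno ⟨hr.symm, hlt, by linarith⟩
end
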